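/- arXiv:2004.08895 — 3 statements merged into one kernel-verified Lean document; each statement's English description precedes it below -/
import Mathlib

section
/- Let f be analytic on the open unit disk with |f(z)| < 1 there. Then for every k ≥ 1 and every z with |z| < 1, |f⁽ᵏ⁾(z)|/k! ≤ (1 - |f(z)|²)/((1 - |z|)ᵏ (1 + |z|)). -/
/-!
Pull `f` back by the disk automorphism `φ w = (w + a) / (conj a * w + 1)`, which maps `0` to `a`.
By Bol's lemma `f⁽ᵏ⁺¹⁾(a)` times `(1 - |a|²)ᵏ⁺¹` is the `(k + 1)`-st derivative at `0` of
`(1 + conj a * w) ^ k * f (φ w)`. The polynomial factor has degree only `k`, so the constant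
coefficient of `f ∘ φ` does not enter, and every other coefficient has modulus at most
`1 - |f a|²`. The latter comes from averaging `g = f ∘ φ` over circles against the kernel
`(1 + b * w ^ n) ^ 2 / w ^ n`, whose modulus on `|w| = 1` is the explicitly averageable
`|1 + b * w ^ n| ^ 2`, while the average of the product sees only `g 0` and the `n`-th coefficient.
-/

open Complex Metric ComplexConjugate Filter Topology

section Moebius

variable {𝕜 F : Type*} [NontriviallyNormedField 𝕜] [NormedAddCommGroup F] [NormedSpace 𝕜 F]
  {f : 𝕜 → F} {x : 𝕜} {n : ℕ}

theorem hasDerivAt_iteratedDeriv (hf : ContDiffAt 𝕜 (n + 1 : ℕ) f x) :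
    HasDerivAt (iteratedDeriv n f) (iteratedDeriv (n + 1) f x) x := by
  rw [iteratedDeriv_succ, hasDerivAt_deriv_iff, iteratedDeriv_eq_equiv_comp]
  exact (LinearIsometryEquiv.differentiable _).differentiableAt.comp x
    (hf.differentiableAt_iteratedFDeriv (mod_cast n.lt_succ_self))

theorem hasDerivAt_affine (γ δ x : 𝕜) : HasDerivAt (fun y ↦ γ * y + δ) γ x := by
  simpa using ((hasDerivAt_id x).const_mul γ).add_const δ

theorem hasDerivAt_moebius (α β : 𝕜) {γ δ : 𝕜} (hx : γ * x + δ ≠ 0) :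
    HasDerivAt (fun y ↦ (α * y + β) / (γ * y + δ))
      ((α * δ - β * γ) / (γ * x + δ) ^ 2) x :=
  ((hasDerivAt_affine α β x).div (hasDerivAt_affine γ δ x) hx).congr_deriv (by ring)

theorem iteratedDeriv_succ_affine_smul (γ δ : 𝕜) (hf : ContDiffAt 𝕜 (n + 1 : ℕ) f x) :
    iteratedDeriv (n + 1) (fun y ↦ (γ * y + δ) • f y) x =
      (γ * x + δ) • iteratedDeriv (n + 1) f x + ((n + 1) * γ) • iteratedDeriv n f x := by
  induction n generalizing x with
  | zero =>
    have h := (hasDerivAt_affine γ δ x).fun_smul (hasDerivAt_iteratedDeriv hf)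
    simpa [iteratedDeriv_one] using! h.deriv
  | succ n ih =>
    have hf' : ContDiffAt 𝕜 (n + 1 : ℕ) f x := hf.of_le (mod_cast n.succ.le_succ)
    have h := ((hasDerivAt_affine γ δ x).fun_smul (hasDerivAt_iteratedDeriv hf)).fun_add
      ((hasDerivAt_iteratedDeriv hf').fun_const_smul ((n + 1) * γ))
    have ih_nhds := (hf'.eventually (by simp)).mono fun _ ↦ ih
    rw [iteratedDeriv_succ, EventuallyEq.deriv_eq ih_nhds, h.deriv]
    push_cast
    module

-- Bol's lemma. The weight `k` is the one for which all derivatives of `f` of order `≤ k` cancel.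
theorem iteratedDeriv_succ_pow_smul_comp_moebius (k : ℕ) {α β γ δ : 𝕜} (hx : γ * x + δ ≠ 0)
    (hf : ContDiffAt 𝕜 (k + 1 : ℕ) f ((α * x + β) / (γ * x + δ))) :
    iteratedDeriv (k + 1) (fun y ↦ (γ * y + δ) ^ k • f ((α * y + β) / (γ * y + δ))) x =
      ((α * δ - β * γ) ^ (k + 1) / (γ * x + δ) ^ (k + 2)) •
        iteratedDeriv (k + 1) f ((α * x + β) / (γ * x + δ)) := by
  induction k generalizing x with
  | zero =>
    have h := (hasDerivAt_iteratedDeriv hf).scomp x (hasDerivAt_moebius α β hx)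
    simpa [iteratedDeriv_one] using! h.deriv
  | succ k ih =>
    set φ : 𝕜 → 𝕜 := fun y ↦ (α * y + β) / (γ * y + δ)
    set g : 𝕜 → F := fun y ↦ (γ * y + δ) ^ k • f (φ y)
    have hφ : ContDiffAt 𝕜 (k + 1 + 1 : ℕ) φ x := by fun_prop (disch := exact hx)
    have hg : ContDiffAt 𝕜 (k + 1 + 1 : ℕ) g x :=
      ContDiffAt.smul (by fun_prop) (hf.comp x hφ)
    have hf' : ContDiffAt 𝕜 (k + 1 : ℕ) f (φ x) := hf.of_le (mod_cast k.succ.le_succ)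
    have hlin := hasDerivAt_affine γ δ x
    have ih_nhds : iteratedDeriv (k + 1) g =ᶠ[𝓝 x] fun y ↦
        ((α * δ - β * γ) ^ (k + 1) / (γ * y + δ) ^ (k + 2)) • iteratedDeriv (k + 1) f (φ y) := by
      filter_upwards [hlin.continuousAt.eventually_ne hx,
        hφ.continuousAt.eventually (hf'.eventually (by simp))] with y hy hfy
      exact ih hy hfy
    have hcoeff := (hasDerivAt_const x ((α * δ - β * γ) ^ (k + 1))).fun_div
      (hlin.fun_pow (k + 2)) (pow_ne_zero _ hx)
    have hcomp : HasDerivAt (fun y ↦ iteratedDeriv (k + 1) f (φ y)) _ x :=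
      HasDerivAt.scomp (h := φ) x (hasDerivAt_iteratedDeriv hf) (hasDerivAt_moebius α β hx)
    simp only [pow_succ' _ k, mul_smul]
    rw [iteratedDeriv_succ_affine_smul γ δ hg, iteratedDeriv_succ, ih_nhds.deriv_eq,
      ih_nhds.eq_of_nhds, (hcoeff.fun_smul hcomp).deriv]
    match_scalars
    · field_simp
      ring
    · push_cast
      field_simp
      ring

theorem norm_iteratedDeriv_affine_pow_smul_le {C : ℝ} {m : ℕ} (γ δ : 𝕜)
    (hf : ContDiffAt 𝕜 n f x)
    (hC : ∀ j ≠ 0, j ≤ n → ‖iteratedDeriv j f x‖ ≤ j.factorial * C) (hmn : m < n) :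
    ‖iteratedDeriv n (fun y ↦ (γ * y + δ) ^ m • f y) x‖ ≤
      n.factorial * ((‖γ * x + δ‖ + ‖γ‖) ^ m * C) := by
  induction m generalizing n with
  | zero => simpa using hC n hmn.ne' le_rfl
  | succ m ih =>
    obtain ⟨n, rfl⟩ : ∃ l, n = l + 1 := Nat.exists_eq_add_one.mpr (by omega)
    set g : 𝕜 → F := fun y ↦ (γ * y + δ) ^ m • f y
    set B : ℝ := (‖γ * x + δ‖ + ‖γ‖) ^ m * C
    have hg : ContDiffAt 𝕜 (n + 1 : ℕ) g x := by fun_prop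
    have hg_succ : ‖iteratedDeriv (n + 1) g x‖ ≤ (n + 1).factorial * B := ih hf hC (by omega)
    have hg_n : ‖iteratedDeriv n g x‖ ≤ n.factorial * B :=
      ih (hf.of_le (mod_cast n.le_succ)) (fun j hj hjn ↦ hC j hj (hjn.trans n.le_succ)) (by omega)
    have hcast : ‖(n + 1 : 𝕜)‖ ≤ n + 1 := by simpa using Nat.norm_cast_le (α := 𝕜) (n + 1)
    calc ‖iteratedDeriv (n + 1) (fun y ↦ (γ * y + δ) ^ (m + 1) • f y) x‖
        = ‖(γ * x + δ) • iteratedDeriv (n + 1) g x + ((n + 1) * γ) • iteratedDeriv n g x‖ := by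
          rw [← iteratedDeriv_succ_affine_smul γ δ hg]
          simp only [pow_succ', mul_smul, g]
      _ ≤ ‖γ * x + δ‖ * ‖iteratedDeriv (n + 1) g x‖ +
            ‖(n + 1 : 𝕜)‖ * ‖γ‖ * ‖iteratedDeriv n g x‖ := by
          simp only [← norm_mul, ← norm_smul]
          exact norm_add_le _ _
      _ ≤ ‖γ * x + δ‖ * ((n + 1).factorial * B) + (n + 1) * ‖γ‖ * (n.factorial * B) := by gcongr
      _ = (n + 1).factorial * ((‖γ * x + δ‖ + ‖γ‖) ^ (m + 1) * C) := by
          rw [Nat.factorial_succ]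
          push_cast
          ring

end Moebius

section CoefficientBound

variable {g : ℂ → ℂ} {c : ℂ} {R M : ℝ} {n : ℕ}

theorem norm_circleAverage_le_circleAverage_norm {E : Type*} [NormedAddCommGroup E]
    [NormedSpace ℝ E] (f : ℂ → E) (c : ℂ) (R : ℝ) :
    ‖Real.circleAverage f c R‖ ≤ Real.circleAverage (fun z ↦ ‖f z‖) c R := by
  simp only [Real.circleAverage, norm_smul, smul_eq_mul,
    Real.norm_of_nonneg (inv_pos.2 Real.two_pi_pos).le]
  gcongr
  exact intervalIntegral.norm_integral_le_integral_norm Real.two_pi_pos.le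

theorem circleAverage_inv_pow_smul_eq_iteratedDeriv {E : Type*} [NormedAddCommGroup E]
    [NormedSpace ℂ E] [CompleteSpace E] {f : ℂ → E} (hR : 0 < R)
    (hf : DiffContOnCl ℂ f (ball c R)) (n : ℕ) :
    Real.circleAverage (fun z ↦ ((z - c) ^ n)⁻¹ • f z) c R =
      (n.factorial : ℂ)⁻¹ • iteratedDeriv n f c := by
  have hkernel : (fun z ↦ (z - c)⁻¹ • ((z - c) ^ n)⁻¹ • f z) =
      fun z ↦ (1 / (z - c) ^ (n + 1)) • f z := by
    funext z
    rw [smul_smul, ← mul_inv, ← pow_succ', one_div]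
  rw [Real.circleAverage_eq_circleIntegral hR.ne', hkernel,
    hf.circleIntegral_one_div_sub_center_pow_smul hR, smul_smul]
  congr 1
  field_simp [two_pi_I_ne_zero]

theorem circleAverage_norm_add_mul_pow_sq (a b c : ℂ) (R : ℝ) (hn : n ≠ 0) :
    Real.circleAverage (fun z ↦ ‖a + b * (z - c) ^ n‖ ^ 2) c R =
      ‖a‖ ^ 2 + ‖b‖ ^ 2 * (R ^ n) ^ 2 := by
  set F : ℂ → ℂ := fun z ↦ (‖a‖ ^ 2 + ‖b‖ ^ 2 * (R ^ n) ^ 2 : ℝ) + 2 * conj a * (b * (z - c) ^ n)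
  have hF : Differentiable ℂ F := by fun_prop
  have hre : Set.EqOn (fun z ↦ ‖a + b * (z - c) ^ n‖ ^ 2) (reCLM ∘ F) (sphere c |R|) := by
    intro z hz
    have hnorm : ‖b * (z - c) ^ n‖ ^ 2 = ‖b‖ ^ 2 * (R ^ n) ^ 2 := by
      rw [norm_mul, norm_pow, mem_sphere_iff_norm.1 hz, mul_pow, ← abs_pow, sq_abs]
    have hsq : ‖a + b * (z - c) ^ n‖ ^ 2 =
        ‖a‖ ^ 2 + ‖b * (z - c) ^ n‖ ^ 2 + 2 * (conj a * (b * (z - c) ^ n)).re := by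
      rw [norm_add_sq_real, Complex.inner, mul_comm (conj a)]
      ring
    simp only [hsq, hnorm, Function.comp_apply, reCLM_apply, F, add_re, ofReal_re, mul_assoc]
    simp
  rw [Real.circleAverage_congr_sphere hre,
    reCLM.circleAverage_comp_comm hF.continuous.continuousOn.circleIntegrable',
    hF.diffContOnCl.circleAverage]
  simp only [F, sub_self, zero_pow hn, mul_zero, add_zero, reCLM_apply, ofReal_re]

theorem circleAverage_mul_sq_div_pow (hR : 0 < R) (hg : DiffContOnCl ℂ g (ball c R)) (hn : n ≠ 0)
    (a b : ℂ) :
    Real.circleAverage (fun z ↦ g z * ((a + b * (z - c) ^ n) ^ 2 / (z - c) ^ n)) c R =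
      a ^ 2 * (iteratedDeriv n g c / n.factorial) + 2 * a * b * g c := by
  set G : ℂ → ℂ := fun z ↦ g z * (2 * a * b + b ^ 2 * (z - c) ^ n)
  have hG : DiffContOnCl ℂ G (ball c R) :=
    hg.smul (Differentiable.diffContOnCl (by fun_prop))
  have hsplit : Set.EqOn (fun z ↦ g z * ((a + b * (z - c) ^ n) ^ 2 / (z - c) ^ n))
      (a ^ 2 • (fun z ↦ ((z - c) ^ n)⁻¹ • g z) + G) (sphere c |R|) := by
    intro z hz
    have hz' : z - c ≠ 0 := sub_ne_zero.2 (ne_of_mem_sphere hz (abs_ne_zero.2 hR.ne'))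
    simp only [G, Pi.add_apply, Pi.smul_apply, smul_eq_mul]
    field_simp
    ring
  have hcauchy : CircleIntegrable (fun z ↦ ((z - c) ^ n)⁻¹ • g z) c R := by
    refine ContinuousOn.circleIntegrable hR.le (ContinuousOn.fun_smul ?_ ?_)
    · exact ContinuousOn.inv₀ (by fun_prop) fun z hz ↦
        pow_ne_zero n (sub_ne_zero.2 (ne_of_mem_sphere hz hR.ne'))
    · exact hg.continuousOn_ball.mono sphere_subset_closedBall
  have hG_int : CircleIntegrable G c R :=
    (hG.continuousOn_ball.mono sphere_subset_closedBall).circleIntegrable hR.le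
  rw [Real.circleAverage_congr_sphere hsplit,
    Real.circleAverage_add hcauchy.const_smul hG_int, Real.circleAverage_smul,
    circleAverage_inv_pow_smul_eq_iteratedDeriv hR hg,
    DiffContOnCl.circleAverage (by rwa [abs_of_pos hR])]
  simp only [G, sub_self, zero_pow hn, smul_eq_mul]
  ring

theorem norm_circleAverage_mul_sq_div_pow_le (hR : 0 < R) (hg : ContinuousOn g (sphere c R))
    (hgM : ∀ z ∈ sphere c R, ‖g z‖ ≤ M) (hn : n ≠ 0) (a b : ℂ) :
    ‖Real.circleAverage (fun z ↦ g z * ((a + b * (z - c) ^ n) ^ 2 / (z - c) ^ n)) c R‖ ≤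
      M / R ^ n * (‖a‖ ^ 2 + ‖b‖ ^ 2 * (R ^ n) ^ 2) := by
  have hcont : ContinuousOn (fun z ↦ g z * ((a + b * (z - c) ^ n) ^ 2 / (z - c) ^ n))
      (sphere c R) :=
    hg.mul <| ContinuousOn.div (by fun_prop) (by fun_prop) fun z hz ↦
      pow_ne_zero n (sub_ne_zero.2 (ne_of_mem_sphere hz hR.ne'))
  calc _ ≤ Real.circleAverage
          (fun z ↦ ‖g z * ((a + b * (z - c) ^ n) ^ 2 / (z - c) ^ n)‖) c R :=
        norm_circleAverage_le_circleAverage_norm _ c R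
    _ ≤ Real.circleAverage (fun z ↦ (M / R ^ n) • ‖a + b * (z - c) ^ n‖ ^ 2) c R := by
        refine Real.circleAverage_mono (hcont.norm.circleIntegrable hR.le)
          (ContinuousOn.circleIntegrable' (by fun_prop)) fun z hz ↦ ?_
        rw [abs_of_pos hR] at hz
        rw [norm_mul, norm_div, norm_pow, norm_pow, mem_sphere_iff_norm.1 hz, smul_eq_mul,
          div_mul_eq_mul_div, mul_div_assoc]
        exact mul_le_mul_of_nonneg_right (hgM z hz) (by positivity)
    _ = M / R ^ n * (‖a‖ ^ 2 + ‖b‖ ^ 2 * (R ^ n) ^ 2) := by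
        rw [Real.circleAverage_fun_smul, circleAverage_norm_add_mul_pow_sq a b c R hn, smul_eq_mul]

theorem norm_iteratedDeriv_le_sub_sq_div_of_forall_mem_sphere (hn : n ≠ 0) (hR : 0 < R)
    (hM : 0 < M) (hg : DiffContOnCl ℂ g (ball c R)) (hgM : ∀ z ∈ sphere c R, ‖g z‖ ≤ M) :
    ‖iteratedDeriv n g c‖ ≤ n.factorial * (M - ‖g c‖ ^ 2 / M) / R ^ n := by
  have hRn : 0 < R ^ n := pow_pos hR n
  set d := iteratedDeriv n g c / n.factorial with hd
  obtain ⟨v, hv, hvd⟩ := exists_norm_mul_eq_self d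
  -- With this `b`, both terms in `circleAverage_mul_sq_div_pow` have the phase `v`.
  set b : ℂ := v * conj (g c) / R ^ n with hb
  have hb_norm : ‖b‖ ^ 2 * (R ^ n) ^ 2 = ‖g c‖ ^ 2 := by
    simp [hb, hv, abs_of_pos hR, ← mul_pow, hRn.ne']
  have haligned : (M : ℂ) ^ 2 * d + 2 * M * b * g c =
      v * (M ^ 2 * ‖d‖ + 2 * M * ‖g c‖ ^ 2 / R ^ n : ℝ) := by
    push_cast
    rw [← conj_mul' (g c), hb]
    linear_combination -(M : ℂ) ^ 2 * hvd
  have hbound := norm_circleAverage_mul_sq_div_pow_le hR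
    (hg.continuousOn_ball.mono sphere_subset_closedBall) hgM hn M b
  rw [circleAverage_mul_sq_div_pow hR hg hn, ← hd, haligned, hb_norm, norm_mul, hv, one_mul,
    norm_real, norm_real, Real.norm_of_nonneg (by positivity), Real.norm_of_nonneg hM.le] at hbound
  have hd_le : ‖d‖ ≤ (M - ‖g c‖ ^ 2 / M) / R ^ n := by
    refine le_of_mul_le_mul_left ?_ (pow_pos hM 2)
    calc M ^ 2 * ‖d‖ ≤ M / R ^ n * (M ^ 2 + ‖g c‖ ^ 2) - 2 * M * ‖g c‖ ^ 2 / R ^ n :=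
          le_sub_iff_add_le.2 hbound
      _ = M ^ 2 * ((M - ‖g c‖ ^ 2 / M) / R ^ n) := by
          field_simp
          ring
  rwa [hd, norm_div, norm_natCast, div_le_iff₀' (by positivity), ← mul_div_assoc] at hd_le

theorem norm_iteratedDeriv_le_sub_sq_div_of_forall_mem_ball (hn : n ≠ 0) (hR : 0 < R)
    (hM : 0 < M) (hg : DifferentiableOn ℂ g (ball c R)) (hgM : ∀ z ∈ ball c R, ‖g z‖ ≤ M) :
    ‖iteratedDeriv n g c‖ ≤ n.factorial * (M - ‖g c‖ ^ 2 / M) / R ^ n := by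
  have hlim : Tendsto (fun r : ℝ ↦ n.factorial * (M - ‖g c‖ ^ 2 / M) / r ^ n) (𝓝[<] R)
      (𝓝 (n.factorial * (M - ‖g c‖ ^ 2 / M) / R ^ n)) :=
    (tendsto_const_nhds.div (tendsto_id.pow n) (pow_ne_zero n hR.ne')).mono_left
      nhdsWithin_le_nhds
  refine ge_of_tendsto hlim ?_
  filter_upwards [Ioo_mem_nhdsLT hR] with r ⟨hr, hrR⟩
  have hsub : closedBall c r ⊆ ball c R := closedBall_subset_ball hrR
  exact norm_iteratedDeriv_le_sub_sq_div_of_forall_mem_sphere hn hr hM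
    ((hg.mono hsub).diffContOnCl_ball subset_rfl)
    fun z hz ↦ hgM z (hsub (sphere_subset_closedBall hz))

end CoefficientBound

section DiskAutomorphism

variable {a w : ℂ}

theorem conj_mul_add_one_ne_zero (ha : ‖a‖ < 1) (hw : ‖w‖ < 1) : conj a * w + 1 ≠ 0 := by
  intro h
  have hprod : ‖a‖ * ‖w‖ = 1 := by
    simpa using congrArg norm (eq_neg_of_add_eq_zero_left h)
  exact (mul_lt_one_of_nonneg_of_lt_one_left (norm_nonneg a) ha hw.le).ne hprod

theorem sq_norm_conj_mul_add_one_sub_sq_norm_add (a w : ℂ) :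
    ‖conj a * w + 1‖ ^ 2 - ‖w + a‖ ^ 2 = (1 - ‖a‖ ^ 2) * (1 - ‖w‖ ^ 2) := by
  simp only [← normSq_eq_norm_sq, normSq_add, normSq_mul, normSq_conj, map_one, mul_one,
    mul_comm w (conj a)]
  ring

theorem norm_add_div_conj_mul_add_one_lt_one (ha : ‖a‖ < 1) (hw : ‖w‖ < 1) :
    ‖(w + a) / (conj a * w + 1)‖ < 1 := by
  have hpos : 0 < (1 - ‖a‖ ^ 2) * (1 - ‖w‖ ^ 2) :=
    mul_pos (sub_pos.2 (pow_lt_one₀ (norm_nonneg a) ha two_ne_zero))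
      (sub_pos.2 (pow_lt_one₀ (norm_nonneg w) hw two_ne_zero))
  rw [norm_div, div_lt_one (norm_pos_iff.2 (conj_mul_add_one_ne_zero ha hw))]
  refine lt_of_pow_lt_pow_left₀ 2 (norm_nonneg _) (sub_pos.1 ?_)
  rwa [sq_norm_conj_mul_add_one_sub_sq_norm_add]

theorem mapsTo_add_div_conj_mul_add_one_ball (ha : ‖a‖ < 1) :
    Set.MapsTo (fun w ↦ (w + a) / (conj a * w + 1)) (ball 0 1) (ball 0 1) := fun w hw ↦ by
  rw [mem_ball_zero_iff] at hw ⊢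
  exact norm_add_div_conj_mul_add_one_lt_one ha hw

theorem differentiableOn_add_div_conj_mul_add_one (ha : ‖a‖ < 1) :
    DifferentiableOn ℂ (fun w ↦ (w + a) / (conj a * w + 1)) (ball 0 1) :=
  DifferentiableOn.div (by fun_prop) (by fun_prop) fun w hw ↦
    conj_mul_add_one_ne_zero ha (mem_ball_zero_iff.1 hw)

theorem iteratedDeriv_succ_pow_smul_comp_disk_automorphism {F : Type*} [NormedAddCommGroup F]
    [NormedSpace ℂ F] {f : ℂ → F} (k : ℕ) (hf : ContDiffAt ℂ (k + 1 : ℕ) f a) :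
    iteratedDeriv (k + 1)
        (fun w ↦ (conj a * w + 1) ^ k • f ((w + a) / (conj a * w + 1))) 0 =
      (1 - a * conj a) ^ (k + 1) • iteratedDeriv (k + 1) f a := by
  simpa using iteratedDeriv_succ_pow_smul_comp_moebius (x := (0 : ℂ)) (α := 1) (β := a)
    (γ := conj a) (δ := 1) k (by simp) (by simpa using hf)

theorem norm_one_sub_mul_conj (ha : ‖a‖ ≤ 1) :
    ‖1 - a * conj a‖ = (1 - ‖a‖) * (1 + ‖a‖) := by
  have hsq : ‖a‖ ^ 2 ≤ 1 := pow_le_one₀ (norm_nonneg a) ha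
  rw [mul_conj', ← ofReal_pow, ← ofReal_one, ← ofReal_sub, norm_real,
    Real.norm_of_nonneg (sub_nonneg.2 hsq)]
  ring

variable {f : ℂ → ℂ} {M : ℝ}

theorem differentiableOn_comp_disk_automorphism (hf : DifferentiableOn ℂ f (ball 0 1))
    (ha : ‖a‖ < 1) :
    DifferentiableOn ℂ (fun w ↦ f ((w + a) / (conj a * w + 1))) (ball 0 1) :=
  hf.comp (differentiableOn_add_div_conj_mul_add_one ha) (mapsTo_add_div_conj_mul_add_one_ball ha)

theorem norm_iteratedDeriv_comp_disk_automorphism_le (hM : 0 < M)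
    (hf : DifferentiableOn ℂ f (ball 0 1)) (hfM : ∀ z ∈ ball 0 1, ‖f z‖ ≤ M) (ha : ‖a‖ < 1)
    {n : ℕ} (hn : n ≠ 0) :
    ‖iteratedDeriv n (fun w ↦ f ((w + a) / (conj a * w + 1))) 0‖ ≤
      n.factorial * (M - ‖f a‖ ^ 2 / M) := by
  simpa using norm_iteratedDeriv_le_sub_sq_div_of_forall_mem_ball hn one_pos hM
    (differentiableOn_comp_disk_automorphism hf ha)
    fun w hw ↦ hfM _ (mapsTo_add_div_conj_mul_add_one_ball ha hw)

theorem one_sub_mul_one_add_pow_mul_norm_iteratedDeriv_succ_le (hM : 0 < M)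
    (hf : DifferentiableOn ℂ f (ball 0 1)) (hfM : ∀ z ∈ ball 0 1, ‖f z‖ ≤ M) (ha : ‖a‖ < 1)
    (k : ℕ) :
    ((1 - ‖a‖) * (1 + ‖a‖)) ^ (k + 1) * ‖iteratedDeriv (k + 1) f a‖ ≤
      (k + 1).factorial * ((1 + ‖a‖) ^ k * (M - ‖f a‖ ^ 2 / M)) := by
  have hf_diff : ContDiffAt ℂ (k + 1 : ℕ) f a :=
    (hf.analyticAt (isOpen_ball.mem_nhds (mem_ball_zero_iff.2 ha))).contDiffAt
  have hg_diff : ContDiffAt ℂ (k + 1 : ℕ) (fun w ↦ f ((w + a) / (conj a * w + 1))) 0 :=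
    ((differentiableOn_comp_disk_automorphism hf ha).analyticAt
      (ball_mem_nhds 0 one_pos)).contDiffAt
  have hbound := norm_iteratedDeriv_affine_pow_smul_le (conj a) 1 hg_diff
    (fun j hj _ ↦ norm_iteratedDeriv_comp_disk_automorphism_le hM hf hfM ha hj) k.lt_succ_self
  rw [iteratedDeriv_succ_pow_smul_comp_disk_automorphism k hf_diff, norm_smul, norm_pow,
    norm_one_sub_mul_conj ha.le] at hbound
  simpa only [mul_zero, zero_add, norm_one, RCLike.norm_conj] using hbound

end DiskAutomorphism

/-- Ruscheweyh's sharp derivative estimate for bounded analytic functions. -/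
theorem ruscheweyh_deriv_estimate (f : ℂ → ℂ)
    (hd : DifferentiableOn ℂ f (Metric.ball (0 : ℂ) 1))
    (hb : ∀ z : ℂ, ‖z‖ < 1 → ‖f z‖ < 1) :
    ∀ k : ℕ, 1 ≤ k → ∀ z : ℂ, ‖z‖ < 1 →
      ‖iteratedDeriv k f z‖ / (Nat.factorial k : ℝ) ≤
        (1 - ‖f z‖ ^ 2) / ((1 - ‖z‖) ^ k * (1 + ‖z‖)) := by
  intro k hk z hz
  obtain ⟨k, rfl⟩ := Nat.exists_eq_add_one.2 hk
  have hbound := one_sub_mul_one_add_pow_mul_norm_iteratedDeriv_succ_le one_pos hd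
    (fun w hw ↦ (hb w (mem_ball_zero_iff.1 hw)).le) hz k
  rw [div_one] at hbound
  have hneg : 0 < 1 - ‖z‖ := sub_pos.2 hz
  have hpos : 0 < 1 + ‖z‖ := by positivity
  rw [div_le_div_iff₀ (by positivity) (mul_pos (pow_pos hneg _) hpos)]
  refine le_of_mul_le_mul_right ?_ (pow_pos hpos k)
  calc _ = ((1 - ‖z‖) * (1 + ‖z‖)) ^ (k + 1) * ‖iteratedDeriv (k + 1) f z‖ := by
        rw [mul_pow]
        ring
    _ ≤ (k + 1).factorial * ((1 + ‖z‖) ^ k * (1 - ‖f z‖ ^ 2)) := hbound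
    _ = _ := by ring
end

section
/- Let f be analytic on the open unit disk with |f(z)| < 1 there, and let m ≥ 1 be an integer. If r ∈ [0,1) satisfies r + rᵐ < 1 and 2r² - (1 - r²ᵐ)(1 - rᵐ - r) ≤ 0, then for all z with |z| = r, |f(zᵐ)| + ∑_{k≥2} (|f⁽ᵏ⁾(zᵐ)|/k!) rᵏ ≤ 1. -/
/-!
For `F` mapping the unit disk into itself with `F w = ∑ cⱼ wʲ`, Wiener's averaging over the `n`-th
roots of unity shows that `u ↦ ∑ cₙⱼ uʲ` again maps the disk into itself, so the Schwarz–Pick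
inequality at `0` gives `‖cₙ‖ ≤ 1 - ‖c₀‖²`. Write `f = F ∘ φ`, where `φ` is the disk automorphism
with `φ a = 0`. Passing from `F` to its difference quotient at `0` shifts the `cⱼ` by one, so the
identity `(1 - ā a) (g - g a) / (z - a) = ā (g - g a) + ((F - F 0) / id) ∘ φ` for `g = F ∘ φ`
bounds the Taylor coefficients of `f` at `a` by induction on the order. This is Ruscheweyh's
inequality `‖f⁽ⁿ⁾(a)‖ / n! ≤ (1 - ‖f a‖²) / ((1 + ‖a‖) (1 - ‖a‖)ⁿ)`. The sum is thus dominated by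
a geometric series, and the condition on `r` says that the value of that series is at most
`(1 - ‖f a‖²) / 2 ≤ 1 - ‖f a‖`.
-/

open Complex ComplexConjugate FormalMultilinearSeries Metric Set Topology

section MobiusComposition

variable {𝕜 E : Type*} [NontriviallyNormedField 𝕜] [NormedAddCommGroup E] [NormedSpace 𝕜 E]
  {a b : 𝕜} {F : 𝕜 → E} {p q q' : FormalMultilinearSeries 𝕜 𝕜 E}

lemma hasDerivAt_mobius (hs : 1 - b * a ≠ 0) :
    HasDerivAt (fun z => (z - a) / (1 - b * z)) (1 - b * a)⁻¹ a := by
  refine (((hasDerivAt_id' a).sub_const a).fun_div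
    (((hasDerivAt_id' a).const_mul b).const_sub 1) hs).congr_deriv ?_
  rw [sub_self, zero_mul, sub_zero, one_mul, sq, div_mul_cancel_left₀ hs]

lemma analyticAt_comp_mobius (hs : 1 - b * a ≠ 0) (hF : AnalyticAt 𝕜 F 0) :
    AnalyticAt 𝕜 (fun z => F ((z - a) / (1 - b * z))) a := by
  refine AnalyticAt.fun_comp (g := F) (by simpa using hF) ?_
  exact AnalyticAt.div (by fun_prop) (by fun_prop) hs

lemma smul_dslope_comp_mobius_eventuallyEq (hs : 1 - b * a ≠ 0) (hF : DifferentiableAt 𝕜 F 0) :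
    (fun z => (1 - b * a) • dslope (fun z => F ((z - a) / (1 - b * z))) a z) =ᶠ[𝓝 a]
      fun z => b • (F ((z - a) / (1 - b * z)) - F 0) + dslope F 0 ((z - a) / (1 - b * z)) := by
  have hne : ∀ᶠ z in 𝓝 a, 1 - b * z ≠ 0 := ContinuousAt.eventually_ne (by fun_prop) hs
  filter_upwards [hne] with z hz
  obtain rfl | hza := eq_or_ne z a
  · have hderiv : deriv (fun w => F ((w - z) / (1 - b * w))) z = (1 - b * z)⁻¹ • deriv F 0 := by
      refine HasDerivAt.deriv (HasDerivAt.scomp (g₁ := F) z ?_ (hasDerivAt_mobius hs))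
      simpa using hF.hasDerivAt
    rw [dslope_same, hderiv, smul_inv_smul₀ hs]
    simp
  · have hslope := sub_smul_dslope F 0 ((z - a) / (1 - b * z))
    rw [sub_zero, div_eq_inv_mul, mul_smul, inv_smul_eq_iff₀ hz, ← div_eq_inv_mul] at hslope
    refine smul_right_injective E (sub_ne_zero.2 hza) ?_
    simp only [smul_add, hslope]
    rw [smul_comm, sub_smul_dslope, sub_self, zero_div]
    module

lemma smul_fslope_comp_mobius (hs : 1 - b * a ≠ 0) (hF : DifferentiableAt 𝕜 F 0)
    (hq : HasFPowerSeriesAt (fun z => F ((z - a) / (1 - b * z))) q a)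
    (hq' : HasFPowerSeriesAt (fun z => dslope F 0 ((z - a) / (1 - b * z))) q' a) :
    (1 - b * a) • q.fslope = b • (q - constFormalMultilinearSeries 𝕜 𝕜 (F 0)) + q' :=
  hq.has_fpower_series_dslope_fslope.const_smul.eq_formalMultilinearSeries_of_eventually
    ((hq.sub hasFPowerSeriesAt_const).const_smul.add hq')
    (smul_dslope_comp_mobius_eventuallyEq hs hF)

lemma smul_coeff_one_comp_mobius (hs : 1 - b * a ≠ 0) (hp : HasFPowerSeriesAt F p 0)
    (hq : HasFPowerSeriesAt (fun z => F ((z - a) / (1 - b * z))) q a) :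
    (1 - b * a) • q.coeff 1 = p.coeff 1 := by
  have hcomp : HasDerivAt (fun z => F ((z - a) / (1 - b * z))) ((1 - b * a)⁻¹ • p.coeff 1) a := by
    refine HasDerivAt.scomp (g₁ := F) a ?_ (hasDerivAt_mobius hs)
    simpa using hp.hasDerivAt
  have hcoeff : q.coeff 1 = (1 - b * a)⁻¹ • p.coeff 1 := hq.hasDerivAt.unique hcomp
  rw [hcoeff, smul_inv_smul₀ hs]

lemma smul_coeff_comp_mobius_add_two (hs : 1 - b * a ≠ 0) (hF : DifferentiableAt 𝕜 F 0)
    (hq : HasFPowerSeriesAt (fun z => F ((z - a) / (1 - b * z))) q a)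
    (hq' : HasFPowerSeriesAt (fun z => dslope F 0 ((z - a) / (1 - b * z))) q' a) (n : ℕ) :
    (1 - b * a) • q.coeff (n + 2) = b • q.coeff (n + 1) + q'.coeff (n + 1) := by
  have hconst : (constFormalMultilinearSeries 𝕜 𝕜 (F 0)).coeff (n + 1) = 0 := by
    rw [coeff, constFormalMultilinearSeries_apply_succ, _root_.zero_apply]
  have h : (1 - b * a) • q.fslope.coeff (n + 1) =
      b • (q.coeff (n + 1) - (constFormalMultilinearSeries 𝕜 𝕜 (F 0)).coeff (n + 1)) +
        q'.coeff (n + 1) :=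
    congrArg (fun p => p.coeff (n + 1)) (smul_fslope_comp_mobius hs hF hq hq')
  rwa [coeff_fslope, hconst, sub_zero] at h

lemma norm_coeff_comp_mobius_le (hs : 1 - b * a ≠ 0) {M : ℝ} (n : ℕ) (hp : HasFPowerSeriesAt F p 0)
    (hM : ∀ j, ‖p.coeff (j + 1)‖ ≤ M)
    (hq : HasFPowerSeriesAt (fun z => F ((z - a) / (1 - b * z))) q a) :
    ‖1 - b * a‖ ^ (n + 1) * ‖q.coeff (n + 1)‖ ≤ M * (1 + ‖b‖) ^ n := by
  induction n generalizing F p q with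
  | zero =>
    rw [zero_add, pow_one, pow_zero, mul_one, ← norm_smul, smul_coeff_one_comp_mobius hs hp hq]
    exact hM 0
  | succ n ih =>
    have hp' := hp.has_fpower_series_dslope_fslope
    obtain ⟨q', hq'⟩ := analyticAt_comp_mobius hs hp'.analyticAt
    have hbq := ih hp hM hq
    have hbq' := ih hp' (fun j => by simpa only [coeff_fslope] using hM (j + 1)) hq'
    calc ‖1 - b * a‖ ^ (n + 2) * ‖q.coeff (n + 2)‖
        = ‖1 - b * a‖ ^ (n + 1) * ‖b • q.coeff (n + 1) + q'.coeff (n + 1)‖ := by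
          rw [← smul_coeff_comp_mobius_add_two hs hp.differentiableAt hq hq', norm_smul]
          ring
      _ ≤ ‖1 - b * a‖ ^ (n + 1) * (‖b‖ * ‖q.coeff (n + 1)‖ + ‖q'.coeff (n + 1)‖) := by
          grw [norm_add_le, norm_smul]
      _ = ‖b‖ * (‖1 - b * a‖ ^ (n + 1) * ‖q.coeff (n + 1)‖) +
            ‖1 - b * a‖ ^ (n + 1) * ‖q'.coeff (n + 1)‖ := by ring
      _ ≤ ‖b‖ * (M * (1 + ‖b‖) ^ n) + M * (1 + ‖b‖) ^ n := by gcongr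
      _ = M * (1 + ‖b‖) ^ (n + 1) := by ring

end MobiusComposition

section DiskAutomorphism

/-- The automorphism `z ↦ (z - a) / (1 - ā z)` of the unit disk, for `‖a‖ < 1`. It moves `a` to `0`,
and its inverse is `diskAutomorphism (-a)`. -/
noncomputable def diskAutomorphism (a z : ℂ) : ℂ :=
  (z - a) / (1 - conj a * z)

lemma diskAutomorphism_self (a : ℂ) : diskAutomorphism a a = 0 := by
  simp [diskAutomorphism]

lemma one_sub_conj_mul_self (a : ℂ) : 1 - conj a * a = ((1 - ‖a‖ ^ 2 : ℝ) : ℂ) := by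
  rw [conj_mul']
  push_cast
  rfl

lemma norm_one_sub_conj_mul_self {a : ℂ} (ha : ‖a‖ ≤ 1) : ‖1 - conj a * a‖ = 1 - ‖a‖ ^ 2 := by
  rw [one_sub_conj_mul_self, norm_real, Real.norm_of_nonneg]
  nlinarith [norm_nonneg a]

lemma sq_norm_one_sub_conj_mul_sub_sq_norm_sub (a z : ℂ) :
    ‖1 - conj a * z‖ ^ 2 - ‖z - a‖ ^ 2 = (1 - ‖a‖ ^ 2) * (1 - ‖z‖ ^ 2) := by
  simp only [← normSq_eq_norm_sq, normSq_apply, sub_re, sub_im, mul_re, mul_im, conj_re, conj_im,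
    one_re, one_im]
  ring

variable {a z : ℂ}

lemma norm_sub_lt_norm_one_sub_conj_mul (ha : ‖a‖ < 1) (hz : ‖z‖ < 1) :
    ‖z - a‖ < ‖1 - conj a * z‖ := by
  have ha' : 0 < 1 - ‖a‖ ^ 2 := by nlinarith [norm_nonneg a]
  have hz' : 0 < 1 - ‖z‖ ^ 2 := by nlinarith [norm_nonneg z]
  refine lt_of_pow_lt_pow_left₀ 2 (norm_nonneg _) ?_
  linarith [sq_norm_one_sub_conj_mul_sub_sq_norm_sub a z, mul_pos ha' hz']

lemma one_sub_conj_mul_ne_zero (ha : ‖a‖ < 1) (hz : ‖z‖ < 1) : 1 - conj a * z ≠ 0 :=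
  norm_pos_iff.1 ((norm_nonneg _).trans_lt (norm_sub_lt_norm_one_sub_conj_mul ha hz))

lemma mapsTo_diskAutomorphism (ha : ‖a‖ < 1) :
    MapsTo (diskAutomorphism a) (ball 0 1) (ball 0 1) := by
  intro z hz
  rw [mem_ball_zero_iff] at hz ⊢
  have h := norm_sub_lt_norm_one_sub_conj_mul ha hz
  rwa [diskAutomorphism, norm_div, div_lt_one ((norm_nonneg _).trans_lt h)]

lemma differentiableOn_diskAutomorphism (ha : ‖a‖ < 1) :
    DifferentiableOn ℂ (diskAutomorphism a) (ball 0 1) :=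
  DifferentiableOn.div (by fun_prop) (by fun_prop) fun _ hz =>
    one_sub_conj_mul_ne_zero ha (mem_ball_zero_iff.1 hz)

lemma diskAutomorphism_neg_diskAutomorphism (ha : ‖a‖ < 1) (hz : ‖z‖ < 1) :
    diskAutomorphism (-a) (diskAutomorphism a z) = z := by
  have hz0 := one_sub_conj_mul_ne_zero ha hz
  have ha0 := one_sub_conj_mul_ne_zero ha ha
  have hnum : (z - a) / (1 - conj a * z) + a = z * (1 - conj a * a) / (1 - conj a * z) := by
    rw [div_add' _ _ _ hz0]
    ring
  have hden : 1 + conj a * ((z - a) / (1 - conj a * z)) =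
      (1 - conj a * a) / (1 - conj a * z) := by
    rw [mul_div_assoc', add_div' _ _ _ hz0]
    ring
  simp only [diskAutomorphism, sub_neg_eq_add, map_neg, neg_mul]
  rw [hnum, hden, div_div_div_cancel_right₀ hz0, mul_div_cancel_right₀ _ ha0]

lemma hasDerivAt_diskAutomorphism_self (ha : ‖a‖ < 1) :
    HasDerivAt (diskAutomorphism a) (1 - conj a * a)⁻¹ a :=
  hasDerivAt_mobius (one_sub_conj_mul_ne_zero ha ha)

lemma norm_deriv_zero_le_one_sub_sq {F : ℂ → ℂ} (hd : DifferentiableOn ℂ F (ball 0 1))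
    (hF : MapsTo F (ball 0 1) (ball 0 1)) : ‖deriv F 0‖ ≤ 1 - ‖F 0‖ ^ 2 := by
  have hF0 : ‖F 0‖ < 1 := mem_ball_zero_iff.1 (hF (mem_ball_self one_pos))
  have hF0' : 0 < 1 - ‖F 0‖ ^ 2 := by nlinarith [norm_nonneg (F 0)]
  have hderiv : deriv (diskAutomorphism (F 0) ∘ F) 0 = (1 - conj (F 0) * F 0)⁻¹ * deriv F 0 :=
    ((hasDerivAt_diskAutomorphism_self hF0).comp 0
      (hd.differentiableAt (ball_mem_nhds 0 one_pos)).hasDerivAt).deriv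
  have hmaps : MapsTo (diskAutomorphism (F 0) ∘ F) (ball 0 1)
      (closedBall ((diskAutomorphism (F 0) ∘ F) 0) 1) := by
    rw [Function.comp_apply, diskAutomorphism_self]
    exact ((mapsTo_diskAutomorphism hF0).comp hF).mono_right ball_subset_closedBall
  have hschwarz := norm_deriv_le_one_of_mapsTo_ball
    ((differentiableOn_diskAutomorphism hF0).comp hd hF) hmaps one_pos
  rwa [hderiv, norm_mul, norm_inv, norm_one_sub_conj_mul_self hF0.le, inv_mul_le_one₀ hF0']
    at hschwarz

end DiskAutomorphism

section Coefficients

lemma sum_pow_pow_eq_ite_of_isPrimitiveRoot {R : Type*} [CommRing R] [IsDomain R] {ζ : R} {n : ℕ}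
    (hζ : IsPrimitiveRoot ζ n) (j : ℕ) :
    ∑ i ∈ Finset.range n, (ζ ^ i) ^ j = if n ∣ j then (n : R) else 0 := by
  simp_rw [← pow_mul, mul_comm _ j, pow_mul]
  split_ifs with h
  · simp [(hζ.pow_eq_one_iff_dvd j).2 h]
  · have hne : ζ ^ j - 1 ≠ 0 := sub_ne_zero.2 fun h1 => h ((hζ.pow_eq_one_iff_dvd j).1 h1)
    refine (mul_eq_zero.1 ?_).resolve_right hne
    rw [geom_sum_mul, ← pow_mul, mul_comm, pow_mul, hζ.pow_eq_one, one_pow, sub_self]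

variable {c : ℕ → ℂ} {F : ℂ → ℂ}

lemma hasSum_mul_pow_section (hF : ∀ w ∈ ball (0 : ℂ) 1, HasSum (fun j => c j * w ^ j) (F w))
    {ζ : ℂ} {n : ℕ} (hζ : IsPrimitiveRoot ζ n) (hn : n ≠ 0) {w : ℂ} (hw : w ∈ ball (0 : ℂ) 1) :
    HasSum (fun j => c (n * j) * (w ^ n) ^ j)
      ((n : ℂ)⁻¹ * ∑ i ∈ Finset.range n, F (ζ ^ i * w)) := by
  have hmem (i : ℕ) : ζ ^ i * w ∈ ball (0 : ℂ) 1 := by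
    simpa [hζ.norm'_eq_one hn] using hw
  have havg := (hasSum_sum fun i (_ : i ∈ Finset.range n) => hF _ (hmem i)).mul_left (n : ℂ)⁻¹
  have hterm (j : ℕ) : (n : ℂ)⁻¹ * ∑ i ∈ Finset.range n, c j * (ζ ^ i * w) ^ j =
      if n ∣ j then c j * w ^ j else 0 := by
    simp_rw [mul_pow, mul_left_comm (c j), ← Finset.sum_mul,
      sum_pow_pow_eq_ite_of_isPrimitiveRoot hζ]
    split_ifs
    · field_simp
    · simp
  simp_rw [hterm] at havg
  rw [← (mul_right_injective₀ hn).hasSum_iff] at havg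
  · simpa [Function.comp_def, pow_mul] using havg
  · exact fun j hj => if_neg fun ⟨k, hk⟩ => hj ⟨k, hk.symm⟩

lemma hasFPowerSeriesOnBall_tsum_mul_pow
    (hc : ∀ w ∈ ball (0 : ℂ) 1, Summable fun j => c j * w ^ j) :
    HasFPowerSeriesOnBall (fun w => ∑' j, c j * w ^ j) (ofScalars ℂ c) 0 1 := by
  have hradius : 1 ≤ (ofScalars ℂ c).radius := by
    refine le_of_forall_lt_imp_le_of_dense fun r hr => ?_
    lift r to NNReal using hr.ne_top
    refine le_radius_of_summable _ ?_
    simpa [ofScalars_norm] using (hc r (by simpa using hr)).norm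
  refine (((ofScalars ℂ c).hasFPowerSeriesOnBall (one_pos.trans_le hradius)).mono one_pos
    hradius).congr fun w _ => ?_
  simp [FormalMultilinearSeries.sum, mul_comm]

lemma norm_coeff_le_one_sub_sq (hF : ∀ w ∈ ball (0 : ℂ) 1, HasSum (fun j => c j * w ^ j) (F w))
    (hmaps : MapsTo F (ball 0 1) (ball 0 1)) {n : ℕ} (hn : n ≠ 0) : ‖c n‖ ≤ 1 - ‖c 0‖ ^ 2 := by
  have hζ := isPrimitiveRoot_exp n hn
  set ζ : ℂ := exp (2 * Real.pi * I / n)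
  set H : ℂ → ℂ := fun u => ∑' j, c (n * j) * u ^ j
  have hroot {u : ℂ} (hu : u ∈ ball (0 : ℂ) 1) : ∃ w ∈ ball (0 : ℂ) 1, w ^ n = u := by
    obtain ⟨w, rfl⟩ := IsAlgClosed.exists_pow_nat_eq u hn.bot_lt
    rw [mem_ball_zero_iff, norm_pow, pow_lt_one_iff_of_nonneg (norm_nonneg w) hn] at hu
    exact ⟨w, mem_ball_zero_iff.2 hu, rfl⟩
  have hH : HasFPowerSeriesOnBall H (ofScalars ℂ fun j => c (n * j)) 0 1 := by
    refine hasFPowerSeriesOnBall_tsum_mul_pow fun u hu => ?_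
    obtain ⟨w, hw, rfl⟩ := hroot hu
    exact (hasSum_mul_pow_section hF hζ hn hw).summable
  have hHmaps : MapsTo H (ball 0 1) (ball 0 1) := by
    intro u hu
    obtain ⟨w, hw, rfl⟩ := hroot hu
    have hHw : H (w ^ n) = ∑ i ∈ Finset.range n, (n : ℝ)⁻¹ • F (ζ ^ i * w) := by
      simpa [Finset.mul_sum] using (hasSum_mul_pow_section hF hζ hn hw).tsum_eq
    rw [hHw]
    refine (convex_ball 0 1).sum_mem (fun _ _ => by positivity) (by simp [hn]) fun i _ => hmaps ?_
    simpa [hζ.norm'_eq_one hn] using hw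
  have hH0 : H 0 = c 0 := by
    simpa using (hH.coeff_zero ![]).symm
  have hH1 : deriv H 0 = c n := by
    simpa using hH.hasFPowerSeriesAt.deriv
  have hHd : DifferentiableOn ℂ H (ball 0 1) := by
    simpa [← eball_ofReal] using hH.differentiableOn
  simpa only [hH0, hH1] using norm_deriv_zero_le_one_sub_sq hHd hHmaps

end Coefficients

section TaylorBounds

variable {f : ℂ → ℂ} {a : ℂ}

lemma norm_iteratedDeriv_zero_div_factorial_le (hd : DifferentiableOn ℂ f (ball 0 1))
    (hf : MapsTo f (ball 0 1) (ball 0 1)) {n : ℕ} (hn : n ≠ 0) :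
    ‖iteratedDeriv n f 0‖ / n.factorial ≤ 1 - ‖f 0‖ ^ 2 := by
  have hsum : ∀ w ∈ ball (0 : ℂ) 1,
      HasSum (fun j => iteratedDeriv j f 0 / j.factorial * w ^ j) (f w) := fun w hw => by
    simpa [div_eq_inv_mul, mul_assoc, mul_comm, mul_left_comm] using
      hasSum_taylorSeries_on_ball hd hw
  simpa using norm_coeff_le_one_sub_sq hsum hf hn

lemma norm_iteratedDeriv_div_factorial_le (hd : DifferentiableOn ℂ f (ball 0 1))
    (hf : MapsTo f (ball 0 1) (ball 0 1)) (ha : ‖a‖ < 1) {n : ℕ} (hn : n ≠ 0) :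
    ‖iteratedDeriv n f a‖ / n.factorial ≤ (1 - ‖f a‖ ^ 2) / ((1 + ‖a‖) * (1 - ‖a‖) ^ n) := by
  obtain ⟨n, rfl⟩ := Nat.exists_eq_succ_of_ne_zero hn
  have hneg : ‖-a‖ < 1 := by rwa [norm_neg]
  have : 0 < 1 - ‖a‖ := sub_pos.2 ha
  have hball : ball (0 : ℂ) 1 ∈ 𝓝 a := isOpen_ball.mem_nhds (mem_ball_zero_iff.2 ha)
  set F : ℂ → ℂ := f ∘ diskAutomorphism (-a) with hF
  have hF0 : F 0 = f a := by simp [hF, diskAutomorphism]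
  have hFd : DifferentiableOn ℂ F (ball 0 1) :=
    hd.comp (differentiableOn_diskAutomorphism hneg) (mapsTo_diskAutomorphism hneg)
  have hFp : HasFPowerSeriesAt F _ 0 := (hFd.analyticAt (ball_mem_nhds 0 one_pos)).hasFPowerSeriesAt
  have hcomp : f =ᶠ[𝓝 a] fun z => F ((z - a) / (1 - conj a * z)) := by
    filter_upwards [hball] with z hz
    exact congrArg f (diskAutomorphism_neg_diskAutomorphism ha (mem_ball_zero_iff.1 hz)).symm
  have hfp := (hd.analyticAt hball).hasFPowerSeriesAt.congr hcomp
  have hbound := norm_coeff_comp_mobius_le (one_sub_conj_mul_ne_zero ha ha) n hFp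
    (M := 1 - ‖f a‖ ^ 2) (fun j => by
      simpa [hF0] using norm_iteratedDeriv_zero_div_factorial_le hFd
        (hf.comp (mapsTo_diskAutomorphism hneg)) j.succ_ne_zero) hfp
  rw [coeff_ofScalars, norm_div, norm_natCast, RCLike.norm_conj,
    norm_one_sub_conj_mul_self ha.le] at hbound
  rw [le_div_iff₀ (by positivity)]
  refine le_of_mul_le_mul_right ?_ (by positivity : 0 < (1 + ‖a‖) ^ n)
  calc ‖iteratedDeriv (n + 1) f a‖ / (n + 1).factorial * ((1 + ‖a‖) * (1 - ‖a‖) ^ (n + 1)) *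
        (1 + ‖a‖) ^ n
      = (1 - ‖a‖ ^ 2) ^ (n + 1) * (‖iteratedDeriv (n + 1) f a‖ / (n + 1).factorial) := by
        rw [← one_pow (M := ℝ) 2, sq_sub_sq, mul_pow]
        ring
    _ ≤ (1 - ‖f a‖ ^ 2) * (1 + ‖a‖) ^ n := hbound

lemma norm_iteratedDeriv_div_factorial_mul_pow_le (hd : DifferentiableOn ℂ f (ball 0 1))
    (hf : MapsTo f (ball 0 1) (ball 0 1)) (ha : ‖a‖ < 1) {r : ℝ} (hr : 0 ≤ r)
    {n : ℕ} (hn : n ≠ 0) :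
    ‖iteratedDeriv n f a‖ / n.factorial * r ^ n ≤
      (1 - ‖f a‖ ^ 2) / (1 + ‖a‖) * (r / (1 - ‖a‖)) ^ n := by
  grw [norm_iteratedDeriv_div_factorial_le hd hf ha hn]
  rw [div_pow, div_mul_div_comm, div_mul_eq_mul_div]

lemma summable_norm_iteratedDeriv_div_factorial_mul_pow (hd : DifferentiableOn ℂ f (ball 0 1))
    (hf : MapsTo f (ball 0 1) (ball 0 1)) {r : ℝ} (hr : 0 ≤ r) (har : ‖a‖ + r < 1) :
    Summable fun k : ℕ => ‖iteratedDeriv k f a‖ / k.factorial * r ^ k := by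
  have ha : 0 < 1 - ‖a‖ := by linarith
  have hq : r / (1 - ‖a‖) < 1 := by rw [div_lt_one ha]; linarith
  refine (summable_nat_add_iff 1).1 (Summable.of_nonneg_of_le (fun k => by positivity)
    (fun k => norm_iteratedDeriv_div_factorial_mul_pow_le hd hf (by linarith) hr k.succ_ne_zero) ?_)
  exact ((summable_nat_add_iff 1).2
    (summable_geometric_of_lt_one (by positivity) hq)).mul_left _

lemma tsum_norm_iteratedDeriv_div_factorial_mul_pow_le (hd : DifferentiableOn ℂ f (ball 0 1))
    (hf : MapsTo f (ball 0 1) (ball 0 1)) {r : ℝ} (hr : 0 ≤ r) (har : ‖a‖ + r < 1)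
    {n : ℕ} (hn : n ≠ 0) :
    ∑' k : ℕ, ‖iteratedDeriv (k + n) f a‖ / (k + n).factorial * r ^ (k + n) ≤
      (1 - ‖f a‖ ^ 2) / (1 + ‖a‖) * ((r / (1 - ‖a‖)) ^ n * (1 - r / (1 - ‖a‖))⁻¹) := by
  have ha : 0 < 1 - ‖a‖ := by linarith
  have hq : r / (1 - ‖a‖) < 1 := by rw [div_lt_one ha]; linarith
  have hgeom := ((hasSum_geometric_of_lt_one (by positivity) hq).mul_left
    ((r / (1 - ‖a‖)) ^ n)).mul_left ((1 - ‖f a‖ ^ 2) / (1 + ‖a‖))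
  have hsum := (summable_nat_add_iff n).2
    (summable_norm_iteratedDeriv_div_factorial_mul_pow hd hf hr har)
  refine hasSum_le (fun k => ?_) hsum.hasSum hgeom
  rw [← pow_add, add_comm n k]
  exact norm_iteratedDeriv_div_factorial_mul_pow_le hd hf (by linarith) hr (by omega)

end TaylorBounds

theorem bohr_improved_two_general {f : ℂ → ℂ} (hd : DifferentiableOn ℂ f (ball 0 1))
    (hf : MapsTo f (ball 0 1) (ball 0 1)) {a : ℂ} (ha : ‖a‖ < 1) {r : ℝ} (hr : 0 ≤ r)
    (hroot : 2 * r ^ 2 ≤ (1 - ‖a‖ ^ 2) * (1 - ‖a‖ - r)) :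
    ‖f a‖ + ∑' k : ℕ, ‖iteratedDeriv (k + 2) f a‖ / (k + 2).factorial * r ^ (k + 2) ≤ 1 := by
  have ha' : 0 < 1 - ‖a‖ := sub_pos.2 ha
  have ha2 : 0 < 1 - ‖a‖ ^ 2 := by nlinarith [norm_nonneg a]
  have har : 0 < 1 - ‖a‖ - r := by
    by_contra! h
    nlinarith [sq_nonneg r]
  have hfa : ‖f a‖ < 1 := mem_ball_zero_iff.1 (hf (mem_ball_zero_iff.2 ha))
  have hvalue : (1 - ‖f a‖ ^ 2) / (1 + ‖a‖) * ((r / (1 - ‖a‖)) ^ 2 * (1 - r / (1 - ‖a‖))⁻¹) =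
      (1 - ‖f a‖ ^ 2) * (r ^ 2 / ((1 - ‖a‖ ^ 2) * (1 - ‖a‖ - r))) := by
    rw [one_sub_div ha'.ne', (by ring : 1 - ‖a‖ ^ 2 = (1 + ‖a‖) * (1 - ‖a‖))]
    field_simp
  have hhalf : r ^ 2 / ((1 - ‖a‖ ^ 2) * (1 - ‖a‖ - r)) ≤ 1 / 2 := by
    rw [div_le_iff₀ (by positivity)]
    linarith
  calc ‖f a‖ + ∑' k : ℕ, ‖iteratedDeriv (k + 2) f a‖ / (k + 2).factorial * r ^ (k + 2)
      ≤ ‖f a‖ + (1 - ‖f a‖ ^ 2) * (r ^ 2 / ((1 - ‖a‖ ^ 2) * (1 - ‖a‖ - r))) := by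
        grw [tsum_norm_iteratedDeriv_div_factorial_mul_pow_le hd hf hr (by linarith) two_ne_zero,
          hvalue]
    _ ≤ ‖f a‖ + (1 - ‖f a‖ ^ 2) * (1 / 2) := by
        gcongr
        nlinarith [norm_nonneg (f a)]
    _ ≤ 1 := by nlinarith [sq_nonneg (1 - ‖f a‖)]

/-- Theorem 3 (sufficiency): Bohr inequality with derivatives in place of coefficients. -/
theorem bohr_improved_two (f : ℂ → ℂ)
    (hd : DifferentiableOn ℂ f (Metric.ball (0 : ℂ) 1))
    (hb : ∀ z : ℂ, ‖z‖ < 1 → ‖f z‖ < 1)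
    (m : ℕ) (hm : 1 ≤ m) (r : ℝ) (hr : r ∈ Set.Ico (0 : ℝ) 1)
    (hsum : r + r ^ m < 1)
    (hroot : 2 * r ^ 2 - (1 - r ^ (2 * m)) * (1 - r ^ m - r) ≤ 0) :
    ∀ z : ℂ, ‖z‖ = r →
      ‖f (z ^ m)‖ +
        ∑' k : ℕ, (‖iteratedDeriv (k + 2) f (z ^ m)‖ / (Nat.factorial (k + 2) : ℝ)) * r ^ (k + 2)
        ≤ 1 := by
  rintro z rfl
  refine bohr_improved_two_general hd (fun w hw => by simpa using hb w (by simpa using hw)) ?_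
    (norm_nonneg z) ?_
  · rw [norm_pow]; linarith [norm_nonneg z]
  · rw [norm_pow, ← pow_mul, mul_comm m]; linarith
end

section
/- Let h(z) = ∑_{n≥0} aₙ zⁿ be analytic on the unit disk with |h| < 1, let g be analytic on the unit disk with |g'(z)| ≤ k |h'(z)| for all |z| < 1 and some k ∈ [0,1], and write g(z) = ∑_{n≥1} bₙ zⁿ. If r ∈ [0,1) satisfies r ≤ 1/3 and 2r(1+k)(1+rᵐ) - (1-r)(1-rᵐ) ≤ 0 for a given positive integer m, then for all z with |z| = r, |h(zᵐ)| + ∑_{n≥1} |aₙ| rⁿ + ∑_{n≥1} |bₙ| rⁿ ≤ 1. -/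
/-!
Write `a = ‖h 0‖` and `B` for the majorant series without its constant term. Only the positivity of
`re (M - β f)`, for `‖f‖ ≤ M` and `‖β‖ = 1`, enters. It yields Carathéodory's bound
`‖aₙ‖ ≤ 2 (1 - a)`, hence `B(h, r) ≤ 2 (1 - a) r / (1 - r)`, and Harnack's inequality yields
`(1 - ‖w‖) / (1 + ‖w‖) * (1 - a) ≤ 1 - ‖h w‖`. In `‖g'‖ ≤ k ‖h'‖` one can divide: `g' = k ω h'` with
`ω` analytic and bounded by `1`. Comparing coefficients, `B(g, r) ≤ k B(h, r)` as soon as the full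
majorant series of `ω` is at most `1`, which is Bohr's theorem for `r ≤ 1 / 3`. The condition on `r`
says precisely that `(1 + k) * 2 r / (1 - r) ≤ (1 - ‖w‖) / (1 + ‖w‖)`.
-/

open Finset Metric Filter Topology

section TaylorCoeff

variable {𝕜 : Type*} [NontriviallyNormedField 𝕜] {f g : 𝕜 → 𝕜} {c : 𝕜}

/-- The `n`-th Taylor coefficient of `f` at `c`, through the iterated derivative, so that no power
series expansion of `f` is presupposed. -/
noncomputable def taylorCoeff (f : 𝕜 → 𝕜) (c : 𝕜) (n : ℕ) : 𝕜 :=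
  iteratedDeriv n f c / (n.factorial : 𝕜)

theorem taylorCoeff_zero (f : 𝕜 → 𝕜) (c : 𝕜) : taylorCoeff f c 0 = f c := by
  simp [taylorCoeff]

theorem taylorCoeff_const_mul (a : 𝕜) (f : 𝕜 → 𝕜) (c : 𝕜) (n : ℕ) :
    taylorCoeff (fun z ↦ a * f z) c n = a * taylorCoeff f c n := by
  simp only [taylorCoeff, iteratedDeriv_const_mul_field, mul_div_assoc]

theorem taylorCoeff_const_sub (a : 𝕜) (f : 𝕜 → 𝕜) (c : 𝕜) {n : ℕ} (hn : n ≠ 0) :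
    taylorCoeff (fun z ↦ a - f z) c n = -taylorCoeff f c n := by
  rw [taylorCoeff, iteratedDeriv_const_sub (Nat.pos_of_ne_zero hn), taylorCoeff]
  simp [neg_div]

theorem taylorCoeff_congr (h : f =ᶠ[𝓝 c] g) (n : ℕ) :
    taylorCoeff f c n = taylorCoeff g c n := by
  rw [taylorCoeff, h.iteratedDeriv_eq, taylorCoeff]

variable [CharZero 𝕜]

theorem taylorCoeff_deriv (f : 𝕜 → 𝕜) (c : 𝕜) (n : ℕ) :
    taylorCoeff (deriv f) c n = (n + 1) * taylorCoeff f c (n + 1) := by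
  have : (n : 𝕜) + 1 ≠ 0 := n.cast_add_one_ne_zero
  rw [taylorCoeff, taylorCoeff, iteratedDeriv_succ', Nat.factorial_succ]
  push_cast
  field_simp

theorem taylorCoeff_mul {n : ℕ} (hf : ContDiffAt 𝕜 n f c) (hg : ContDiffAt 𝕜 n g c) :
    taylorCoeff (f * g) c n =
      ∑ p ∈ antidiagonal n, taylorCoeff f c p.1 * taylorCoeff g c p.2 := by
  simp only [taylorCoeff, iteratedDeriv_mul hf hg, sum_div,
    Finset.Nat.sum_antidiagonal_eq_sum_range_succ_mk]
  refine sum_congr rfl fun i hi ↦ ?_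
  rw [Nat.cast_choose _ (mem_range_succ_iff.mp hi)]
  field_simp [Nat.factorial_ne_zero]

end TaylorCoeff

section CircleAverage

open Real

variable {f : ℂ → ℂ} {c : ℂ} {ρ : ℝ}

theorem circleAverage_inv_pow_mul (hρ : 0 < ρ) (hf : DifferentiableOn ℂ f (closedBall c ρ))
    (n : ℕ) : circleAverage (fun z ↦ ((z - c) ^ n)⁻¹ * f z) c ρ = taylorCoeff f c n := by
  have h_cauchy := hf.circleIntegral_one_div_sub_center_pow_smul hρ n
  have h_integrand : ∀ z, (z - c)⁻¹ • (((z - c) ^ n)⁻¹ * f z) =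
      (1 / (z - c) ^ (n + 1)) • f z := fun z ↦ by
    rw [pow_succ', one_div, mul_inv, smul_eq_mul, smul_eq_mul, mul_assoc]
  rw [circleAverage_eq_circleIntegral hρ.ne']
  simp_rw [h_integrand, h_cauchy, taylorCoeff, smul_eq_mul]
  field_simp [Complex.two_pi_I_ne_zero]

theorem circleAverage_pow_mul (hρ : 0 < ρ) (hf : DifferentiableOn ℂ f (closedBall c ρ))
    {n : ℕ} (hn : n ≠ 0) : circleAverage (fun z ↦ (z - c) ^ n * f z) c ρ = 0 := by
  have h_diff : DifferentiableOn ℂ (fun z ↦ (z - c) ^ n * f z) (closedBall c |ρ|) := by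
    rw [abs_of_pos hρ]
    fun_prop
  rw [(h_diff.mono closure_ball_subset_closedBall).diffContOnCl.circleAverage]
  simp [hn]

theorem sub_pow_ne_zero_of_mem_sphere {z : ℂ} (hρ : 0 < ρ) (n : ℕ) (hz : z ∈ sphere c ρ) :
    (z - c) ^ n ≠ 0 :=
  pow_ne_zero n (sub_ne_zero.mpr (ne_of_mem_sphere hz hρ.ne'))

theorem circleAverage_two_sub_inv_pow_sub_pow_mul (hρ : 0 < ρ)
    (hf : DifferentiableOn ℂ f (closedBall c ρ)) {n : ℕ} (hn : n ≠ 0) (a b : ℂ) :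
    circleAverage (fun z ↦ (2 - a * ((z - c) ^ n)⁻¹ - b * (z - c) ^ n) * f z) c ρ =
      2 * f c - a * taylorCoeff f c n := by
  have hf_cont : ContinuousOn f (sphere c ρ) := hf.continuousOn.mono sphere_subset_closedBall
  have h_const : CircleIntegrable (fun z ↦ (2 : ℂ) • f z) c ρ :=
    ContinuousOn.circleIntegrable hρ.le (by fun_prop)
  have h_inv : CircleIntegrable (fun z ↦ a • (((z - c) ^ n)⁻¹ * f z)) c ρ :=
    ContinuousOn.circleIntegrable hρ.le
      (by fun_prop (disch := exact fun z ↦ sub_pow_ne_zero_of_mem_sphere hρ n))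
  have h_pow : CircleIntegrable (fun z ↦ b • ((z - c) ^ n * f z)) c ρ :=
    ContinuousOn.circleIntegrable hρ.le (by fun_prop)
  have h_mean : circleAverage f c ρ = f c := by
    simpa [taylorCoeff_zero] using circleAverage_inv_pow_mul hρ hf 0
  calc circleAverage (fun z ↦ (2 - a * ((z - c) ^ n)⁻¹ - b * (z - c) ^ n) * f z) c ρ
    _ = circleAverage (fun z ↦ (2 : ℂ) • f z - a • (((z - c) ^ n)⁻¹ * f z)
          - b • ((z - c) ^ n * f z)) c ρ := by
      congr 1 with z
      simp only [smul_eq_mul]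
      ring
    _ = 2 * f c - a * taylorCoeff f c n := by
      rw [circleAverage_fun_sub (by exact h_const.sub h_inv) h_pow,
        circleAverage_fun_sub h_const h_inv, circleAverage_fun_smul, circleAverage_fun_smul,
        circleAverage_fun_smul, h_mean, circleAverage_inv_pow_mul hρ hf,
        circleAverage_pow_mul hρ hf hn, smul_zero, sub_zero, smul_eq_mul, smul_eq_mul]

end CircleAverage

section PositiveRealPart

open Real

variable {f : ℂ → ℂ} {c : ℂ} {ρ R : ℝ}

theorem re_two_sub_sub_inv_mul_nonneg {q ζ : ℂ} (hq : ‖q‖ = 1) (hζ : 0 ≤ ζ.re) :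
    0 ≤ ((2 - q - q⁻¹) * ζ).re := by
  have hq_le : q.re ≤ 1 := (Complex.re_le_norm q).trans_eq hq
  have h_real : 2 - q - q⁻¹ = ((2 - 2 * q.re : ℝ) : ℂ) := by
    rw [Complex.inv_eq_conj hq, sub_sub, Complex.add_conj]
    push_cast
    ring
  rw [h_real, Complex.re_ofReal_mul]
  exact mul_nonneg (by linarith) hζ

theorem norm_taylorCoeff_mul_pow_le_of_re_nonneg_closedBall (hρ : 0 < ρ)
    (hf : DifferentiableOn ℂ f (closedBall c ρ)) (hre : ∀ z ∈ sphere c ρ, 0 ≤ (f z).re)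
    {n : ℕ} (hn : n ≠ 0) : ‖taylorCoeff f c n‖ * ρ ^ n ≤ 2 * (f c).re := by
  obtain ⟨β, hβ, (hβf : (‖taylorCoeff f c n‖ : ℂ) = _)⟩ :=
    RCLike.exists_norm_eq_mul_self (taylorCoeff f c n)
  set q : ℂ → ℂ := fun z ↦ β * ρ ^ n * ((z - c) ^ n)⁻¹
  set Φ : ℂ → ℂ := fun z ↦ (2 - q z - (β * ρ ^ n)⁻¹ * (z - c) ^ n) * f z
  have hq : ∀ z ∈ sphere c ρ, ‖q z‖ = 1 := fun z hz ↦ by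
    simp [q, hβ, mem_sphere_iff_norm.mp hz, abs_of_pos hρ, hρ.ne']
  -- `q` is unimodular on the circle, which makes the factor `2 - q - q⁻¹` real and nonnegative.
  have hΦ_nonneg : ∀ z ∈ sphere c |ρ|, 0 ≤ (Φ z).re := fun z hz ↦ by
    rw [abs_of_pos hρ] at hz
    have hq_inv : (β * ρ ^ n)⁻¹ * (z - c) ^ n = (q z)⁻¹ := by simp [q, mul_comm]
    simpa only [Φ, hq_inv] using re_two_sub_sub_inv_mul_nonneg (hq z hz) (hre z hz)
  have hΦ_integrable : CircleIntegrable Φ c ρ := by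
    have hf_cont := hf.continuousOn.mono sphere_subset_closedBall
    exact ContinuousOn.circleIntegrable hρ.le
      (by fun_prop (disch := exact fun z ↦ sub_pow_ne_zero_of_mem_sphere hρ n))
  have hΦ_avg : circleAverage Φ c ρ = 2 * f c - (‖taylorCoeff f c n‖ * ρ ^ n : ℝ) := by
    rw [circleAverage_two_sub_inv_pow_sub_pow_mul hρ hf hn]
    push_cast
    rw [hβf]
    ring
  have h_avg_nonneg : 0 ≤ (circleAverage Φ c ρ).re :=
    (circleAverage_nonneg_of_nonneg hΦ_nonneg).trans_eq
      (Complex.reCLM.circleAverage_comp_comm hΦ_integrable)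
  rw [hΦ_avg, Complex.sub_re, Complex.ofReal_re] at h_avg_nonneg
  simpa using h_avg_nonneg

theorem norm_taylorCoeff_mul_pow_le_of_re_nonneg (hR : 0 < R)
    (hf : DifferentiableOn ℂ f (ball c R)) (hre : ∀ z ∈ ball c R, 0 ≤ (f z).re)
    {n : ℕ} (hn : n ≠ 0) : ‖taylorCoeff f c n‖ * R ^ n ≤ 2 * (f c).re := by
  have h_lim : Tendsto (fun ρ : ℝ ↦ ‖taylorCoeff f c n‖ * ρ ^ n) (𝓝[<] R)
      (𝓝 (‖taylorCoeff f c n‖ * R ^ n)) :=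
    (by fun_prop : Continuous fun ρ : ℝ ↦ ‖taylorCoeff f c n‖ * ρ ^ n).continuousWithinAt
  refine le_of_tendsto h_lim ?_
  filter_upwards [Ioo_mem_nhdsLT hR] with ρ ⟨hρ, hρR⟩
  have h_sub := closedBall_subset_ball (x := c) hρR
  exact norm_taylorCoeff_mul_pow_le_of_re_nonneg_closedBall hρ (hf.mono h_sub)
    (fun z hz ↦ hre z (h_sub (sphere_subset_closedBall hz))) hn

end PositiveRealPart

section Harnack

open InnerProductSpace Real

variable {u : ℂ → ℝ} {c w : ℂ} {R : ℝ}

theorem harnack_lower_bound_closedBall (hu : HarmonicOnNhd u (closedBall c R))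
    (hu_nonneg : ∀ z ∈ sphere c R, 0 ≤ u z) (hw : w ∈ ball c R) :
    (R - ‖w - c‖) / (R + ‖w - c‖) * u c ≤ u w := by
  have hR : 0 < R := pos_of_mem_ball hw
  have hR_abs : |R| = R := abs_of_pos hR
  have hu_cont : ContinuousOn u (sphere c R) :=
    fun z hz ↦ (hu z (sphere_subset_closedBall hz)).1.continuousAt.continuousWithinAt
  have hK_cont : ContinuousOn (Complex.re ∘ herglotzRieszKernel c w) (sphere c R) := by
    have := continuousOn_herglotzRieszKernel_sphere hw
    rw [hR_abs] at this
    exact Complex.continuous_re.comp_continuousOn this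
  calc (R - ‖w - c‖) / (R + ‖w - c‖) * u c
    _ = circleAverage (((R - ‖w - c‖) / (R + ‖w - c‖)) • u) c R := by
      rw [circleAverage_smul, smul_eq_mul,
        InnerProductSpace.HarmonicOnNhd.circleAverage_eq (by rwa [hR_abs])]
    _ ≤ circleAverage ((Complex.re ∘ herglotzRieszKernel c w) • u) c R := by
      refine circleAverage_mono ?_ ?_ ?_
      · exact ContinuousOn.circleIntegrable hR.le (hu_cont.const_smul _)
      · exact ContinuousOn.circleIntegrable hR.le (hK_cont.smul hu_cont)
      · rw [hR_abs]
        intro z hz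
        exact mul_le_mul_of_nonneg_right (le_re_herglotzRieszKernel hz hw) (hu_nonneg z hz)
    _ = u w := hu.circleAverage_re_herglotzRieszKernel_smul hw

theorem harnack_lower_bound (hu : HarmonicOnNhd u (ball c R))
    (hu_nonneg : ∀ z ∈ ball c R, 0 ≤ u z) (hw : w ∈ ball c R) :
    (R - ‖w - c‖) / (R + ‖w - c‖) * u c ≤ u w := by
  have hR : 0 < R := pos_of_mem_ball hw
  have h_lim : Tendsto (fun ρ : ℝ ↦ (ρ - ‖w - c‖) / (ρ + ‖w - c‖) * u c) (𝓝[<] R)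
      (𝓝 ((R - ‖w - c‖) / (R + ‖w - c‖) * u c)) := by
    have : R + ‖w - c‖ ≠ 0 := by positivity
    refine ContinuousAt.continuousWithinAt ?_
    fun_prop (disch := assumption)
  refine le_of_tendsto h_lim ?_
  filter_upwards [Ioo_mem_nhdsLT (mem_ball_iff_norm.mp hw)] with ρ ⟨hwρ, hρR⟩
  have h_sub := closedBall_subset_ball (x := c) hρR
  exact harnack_lower_bound_closedBall (hu.mono h_sub)
    (fun z hz ↦ hu_nonneg z (h_sub (sphere_subset_closedBall hz))) (mem_ball_iff_norm.mpr hwρ)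

end Harnack

section Majorant

variable {f : ℂ → ℂ} {c : ℂ} {r R : ℝ}

/-- The majorant series `∑_{n ≥ N} ‖aₙ‖ rⁿ` of `f` at `c`, where `aₙ` is the `n`-th Taylor
coefficient; it takes the junk value `0` when the series diverges. -/
noncomputable def majorant (N : ℕ) (f : ℂ → ℂ) (c : ℂ) (r : ℝ) : ℝ :=
  ∑' n : ℕ, ‖taylorCoeff f c (n + N)‖ * r ^ (n + N)

theorem majorant_nonneg (N : ℕ) (f : ℂ → ℂ) (c : ℂ) (hr : 0 ≤ r) : 0 ≤ majorant N f c r :=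
  tsum_nonneg fun _ ↦ by positivity

theorem majorant_const_mul (N : ℕ) (a : ℂ) (f : ℂ → ℂ) (c : ℂ) (r : ℝ) :
    majorant N (fun z ↦ a * f z) c r = ‖a‖ * majorant N f c r := by
  simp only [majorant, taylorCoeff_const_mul, norm_mul, mul_assoc, tsum_mul_left]

theorem summable_majorant (hf : DifferentiableOn ℂ f (ball c R)) (hr : 0 ≤ r) (hrR : r < R)
    (N : ℕ) : Summable fun n ↦ ‖taylorCoeff f c (n + N)‖ * r ^ (n + N) := by
  have h_mem : c + r ∈ ball c R := by simpa [abs_of_nonneg hr]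
  rw [summable_nat_add_iff N (f := fun n ↦ ‖taylorCoeff f c n‖ * r ^ n)]
  refine (Complex.hasSum_taylorSeries_on_ball hf h_mem).summable.norm.congr fun n ↦ ?_
  simp only [taylorCoeff, add_sub_cancel_left, norm_smul, norm_div, norm_inv, norm_pow,
    Complex.norm_of_nonneg hr]
  ring

theorem majorant_zero_eq_norm_add_majorant_one (hf : DifferentiableOn ℂ f (ball c R))
    (hr : 0 ≤ r) (hrR : r < R) : majorant 0 f c r = ‖f c‖ + majorant 1 f c r := by
  rw [majorant, (summable_majorant hf hr hrR 0).tsum_eq_zero_add]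
  simp only [majorant, add_zero, taylorCoeff_zero, pow_zero, mul_one]

end Majorant

section BoundedFunctions

variable {f : ℂ → ℂ} {c w : ℂ} {r R M : ℝ}

theorem sub_norm_le_re_sub_mul {β : ℂ} (hβ : ‖β‖ = 1) (M : ℝ) (ζ : ℂ) :
    M - ‖ζ‖ ≤ ((M : ℂ) - β * ζ).re := by
  have : (β * ζ).re ≤ ‖ζ‖ := (Complex.re_le_norm _).trans_eq (by rw [norm_mul, hβ, one_mul])
  rw [Complex.sub_re, Complex.ofReal_re]
  linarith

theorem norm_taylorCoeff_mul_pow_le_of_norm_le (hR : 0 < R) (hf : DifferentiableOn ℂ f (ball c R))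
    (hM : ∀ z ∈ ball c R, ‖f z‖ ≤ M) {n : ℕ} (hn : n ≠ 0) :
    ‖taylorCoeff f c n‖ * R ^ n ≤ 2 * (M - ‖f c‖) := by
  obtain ⟨β, hβ, (hβf : (‖f c‖ : ℂ) = β * f c)⟩ := RCLike.exists_norm_eq_mul_self (f c)
  have h := norm_taylorCoeff_mul_pow_le_of_re_nonneg hR ((hf.const_mul β).const_sub (M : ℂ))
    (fun z hz ↦ (sub_nonneg.mpr (hM z hz)).trans (sub_norm_le_re_sub_mul hβ M (f z))) hn
  simpa [taylorCoeff_const_sub _ _ _ hn, taylorCoeff_const_mul, hβ, ← hβf] using h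

theorem div_mul_sub_norm_le_sub_norm (hf : DifferentiableOn ℂ f (ball c R))
    (hM : ∀ z ∈ ball c R, ‖f z‖ ≤ M) (hw : w ∈ ball c R) :
    (R - ‖w - c‖) / (R + ‖w - c‖) * (M - ‖f c‖) ≤ M - ‖f w‖ := by
  obtain ⟨β, hβ, (hβf : (‖f w‖ : ℂ) = β * f w)⟩ := RCLike.exists_norm_eq_mul_self (f w)
  have h_harmonic : InnerProductSpace.HarmonicOnNhd (fun z ↦ ((M : ℂ) - β * f z).re) (ball c R) :=
    fun z hz ↦ AnalyticAt.harmonicAt_re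
      (((hf.const_mul β).const_sub (M : ℂ)).analyticAt (isOpen_ball.mem_nhds hz))
  have h_harnack := harnack_lower_bound h_harmonic
    (fun z hz ↦ (sub_nonneg.mpr (hM z hz)).trans (sub_norm_le_re_sub_mul hβ M (f z))) hw
  have h_coef : 0 ≤ (R - ‖w - c‖) / (R + ‖w - c‖) := by
    have hR : 0 < R := pos_of_mem_ball hw
    have hw_lt : 0 < R - ‖w - c‖ := sub_pos.mpr (mem_ball_iff_norm.mp hw)
    positivity
  calc (R - ‖w - c‖) / (R + ‖w - c‖) * (M - ‖f c‖)
    _ ≤ (R - ‖w - c‖) / (R + ‖w - c‖) * ((M : ℂ) - β * f c).re := by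
      gcongr
      exact sub_norm_le_re_sub_mul hβ M (f c)
    _ ≤ ((M : ℂ) - β * f w).re := h_harnack
    _ = M - ‖f w‖ := by simp [← hβf]

theorem majorant_one_le_of_norm_le (hf : DifferentiableOn ℂ f (ball c R))
    (hM : ∀ z ∈ ball c R, ‖f z‖ ≤ M) (hr : 0 ≤ r) (hrR : r < R) :
    majorant 1 f c r ≤ 2 * (M - ‖f c‖) * (r / (R - r)) := by
  have hR : 0 < R := hr.trans_lt hrR
  have h_geom : HasSum (fun n : ℕ ↦ 2 * (M - ‖f c‖) * (r / R) ^ (n + 1))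
      (2 * (M - ‖f c‖) * (r / (R - r))) := by
    have h := (hasSum_geometric_of_lt_one (by positivity) ((div_lt_one hR).mpr hrR)).mul_left
      (r / R)
    simp_rw [← pow_succ', one_sub_div hR.ne', inv_div, div_mul_div_cancel₀ hR.ne'] at h
    exact h.mul_left _
  refine hasSum_le (fun n ↦ ?_) (summable_majorant hf hr hrR 1).hasSum h_geom
  calc ‖taylorCoeff f c (n + 1)‖ * r ^ (n + 1)
    _ = ‖taylorCoeff f c (n + 1)‖ * R ^ (n + 1) * (r / R) ^ (n + 1) := by
      rw [div_pow, mul_assoc, mul_div_cancel₀ _ (by positivity)]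
    _ ≤ 2 * (M - ‖f c‖) * (r / R) ^ (n + 1) := by
      gcongr ?_ * (r / R) ^ (n + 1)
      exact norm_taylorCoeff_mul_pow_le_of_norm_le hR hf hM n.succ_ne_zero

theorem majorant_zero_le_of_norm_le (hR : 0 < R) (hf : DifferentiableOn ℂ f (ball c R))
    (hM : ∀ z ∈ ball c R, ‖f z‖ ≤ M) (hr : 0 ≤ r) (hrR : r ≤ R / 3) :
    majorant 0 f c r ≤ M := by
  have h_ratio : r / (R - r) ≤ 1 / 2 := by
    rw [div_le_div_iff₀ (by linarith) two_pos]
    linarith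
  have h_center : 0 ≤ M - ‖f c‖ := sub_nonneg.mpr (hM c (mem_ball_self hR))
  calc majorant 0 f c r
    _ = ‖f c‖ + majorant 1 f c r := majorant_zero_eq_norm_add_majorant_one hf hr (by linarith)
    _ ≤ ‖f c‖ + 2 * (M - ‖f c‖) * (r / (R - r)) := by
      gcongr
      exact majorant_one_le_of_norm_le hf hM hr (by linarith)
    _ ≤ ‖f c‖ + 2 * (M - ‖f c‖) * (1 / 2) := by gcongr
    _ = M := by ring

end BoundedFunctions

section BoundedQuotient

theorem exists_differentiableOn_eq_mul_of_norm_le {U : Set ℂ} (hU : IsOpen U) {F H : ℂ → ℂ}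
    (hF : DifferentiableOn ℂ F U) (hH : DifferentiableOn ℂ H U)
    (hFH : ∀ z ∈ U, ‖F z‖ ≤ ‖H z‖) :
    ∃ ω : ℂ → ℂ, DifferentiableOn ℂ ω U ∧ (∀ z ∈ U, ‖ω z‖ ≤ 1) ∧ ∀ z ∈ U, F z = ω z * H z := by
  set ω := toMeromorphicNFOn (F / H) U
  have hF_an : AnalyticOnNhd ℂ F U := hF.analyticOnNhd hU
  have hH_an : AnalyticOnNhd ℂ H U := hH.analyticOnNhd hU
  have h_mero : MeromorphicOn (F / H) U := hF_an.meromorphicOn.div hH_an.meromorphicOn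
  have h_punctured : ∀ c ∈ U, ∀ᶠ z in 𝓝[≠] c, z ∈ U ∧ ω z = F z / H z := fun c hc ↦
    ((hU.eventually_mem hc).filter_mono nhdsWithin_le_nhds).and
      (h_mero.toMeromorphicNFOn_eq_self_on_nhdsNE hc)
  have h_le : ∀ c ∈ U, ∀ᶠ z in 𝓝[≠] c, ‖ω z‖ ≤ 1 := fun c hc ↦ by
    filter_upwards [h_punctured c hc] with z ⟨hz, hωz⟩
    rw [hωz, norm_div]
    exact div_le_one_of_le₀ (hFH z hz) (norm_nonneg _)
  have hω_an : ∀ c ∈ U, AnalyticAt ℂ ω c := fun c hc ↦ by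
    have hNF := meromorphicNFOn_toMeromorphicNFOn (F / H) U hc
    rw [← hNF.meromorphicOrderAt_nonneg_iff_analyticAt]
    by_contra! h_neg
    have h_pole := tendsto_cobounded_of_meromorphicOrderAt_neg h_neg
    obtain ⟨z, hz_le, hz_gt⟩ := ((h_le c hc).and
      ((tendsto_norm_cobounded_atTop.comp h_pole).eventually_gt_atTop 1)).exists
    exact hz_le.not_gt hz_gt
  have hω_cont : ∀ c ∈ U, ContinuousAt ω c := fun c hc ↦ (hω_an c hc).continuousAt
  refine ⟨ω, fun c hc ↦ (hω_an c hc).differentiableAt.differentiableWithinAt, fun c hc ↦ ?_,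
    fun c hc ↦ ?_⟩
  · exact le_of_tendsto (hω_cont c hc).continuousWithinAt.norm (h_le c hc)
  · have h_eq : ∀ᶠ z in 𝓝[≠] c, F z = ω z * H z := by
      filter_upwards [h_punctured c hc] with z ⟨hz, hωz⟩
      rw [hωz, div_mul_cancel_of_imp]
      intro hHz
      simpa [hHz] using hFH z hz
    have hF_cont := (hF_an c hc).continuousAt
    have hH_cont := (hH_an c hc).continuousAt
    exact ((hF_cont.eventuallyEq_nhds_iff_eventuallyEq_nhdsNE
      ((hω_cont c hc).mul hH_cont)).mp h_eq).eq_of_nhds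

end BoundedQuotient

section Comparison

variable {g h ω : ℂ → ℂ} {c : ℂ} {r R : ℝ}

theorem norm_taylorCoeff_succ_le_of_deriv_eq_mul (hω : AnalyticAt ℂ ω c) (hh : AnalyticAt ℂ h c)
    (hg : deriv g =ᶠ[𝓝 c] ω * deriv h) (n : ℕ) :
    ‖taylorCoeff g c (n + 1)‖ ≤
      ∑ p ∈ antidiagonal n, ‖taylorCoeff ω c p.1‖ * ‖taylorCoeff h c (p.2 + 1)‖ := by
  have h_coeff : (n + 1) * taylorCoeff g c (n + 1) =
      ∑ p ∈ antidiagonal n, taylorCoeff ω c p.1 * ((p.2 + 1) * taylorCoeff h c (p.2 + 1)) := by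
    rw [← taylorCoeff_deriv, taylorCoeff_congr hg,
      taylorCoeff_mul hω.contDiffAt hh.deriv.contDiffAt]
    simp only [taylorCoeff_deriv]
  have h_norm_cast : ∀ j : ℕ, ‖(j : ℂ) + 1‖ = j + 1 := fun j ↦ by
    exact_mod_cast Complex.norm_natCast (j + 1)
  refine le_of_mul_le_mul_left ?_ n.cast_add_one_pos
  calc (n + 1 : ℝ) * ‖taylorCoeff g c (n + 1)‖
    _ = ‖∑ p ∈ antidiagonal n,
          taylorCoeff ω c p.1 * ((p.2 + 1) * taylorCoeff h c (p.2 + 1))‖ := by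
      rw [← h_coeff, norm_mul, h_norm_cast]
    _ ≤ ∑ p ∈ antidiagonal n,
          ‖taylorCoeff ω c p.1‖ * ((p.2 + 1) * ‖taylorCoeff h c (p.2 + 1)‖) := by
      refine (norm_sum_le _ _).trans_eq ?_
      simp only [norm_mul, h_norm_cast]
    _ ≤ ∑ p ∈ antidiagonal n,
          ‖taylorCoeff ω c p.1‖ * ((n + 1) * ‖taylorCoeff h c (p.2 + 1)‖) := by
      gcongr with p hp
      exact HasAntidiagonal.antidiagonal.snd_le hp
    _ = (n + 1) * ∑ p ∈ antidiagonal n,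
          ‖taylorCoeff ω c p.1‖ * ‖taylorCoeff h c (p.2 + 1)‖ := by
      simp only [mul_sum, mul_left_comm]

theorem majorant_one_le_mul_of_deriv_eq_mul (hg : DifferentiableOn ℂ g (ball c R))
    (hω : DifferentiableOn ℂ ω (ball c R)) (hh : DifferentiableOn ℂ h (ball c R))
    (hgh : ∀ z ∈ ball c R, deriv g z = ω z * deriv h z) (hr : 0 ≤ r) (hrR : r < R) :
    majorant 1 g c r ≤ majorant 0 ω c r * majorant 1 h c r := by
  have h_nhds : ball c R ∈ 𝓝 c := ball_mem_nhds c (hr.trans_lt hrR)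
  have h_le : ∀ n, ‖taylorCoeff g c (n + 1)‖ * r ^ (n + 1) ≤ ∑ p ∈ antidiagonal n,
      ‖taylorCoeff ω c p.1‖ * r ^ p.1 *
        (‖taylorCoeff h c (p.2 + 1)‖ * r ^ (p.2 + 1)) := fun n ↦ by
    calc ‖taylorCoeff g c (n + 1)‖ * r ^ (n + 1)
      _ ≤ (∑ p ∈ antidiagonal n, ‖taylorCoeff ω c p.1‖ * ‖taylorCoeff h c (p.2 + 1)‖) *
            r ^ (n + 1) := by
        gcongr
        exact norm_taylorCoeff_succ_le_of_deriv_eq_mul (hω.analyticAt h_nhds)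
          (hh.analyticAt h_nhds) (eventually_of_mem h_nhds hgh) n
      _ = ∑ p ∈ antidiagonal n, ‖taylorCoeff ω c p.1‖ * r ^ p.1 *
            (‖taylorCoeff h c (p.2 + 1)‖ * r ^ (p.2 + 1)) := by
        rw [sum_mul]
        refine sum_congr rfl fun p hp ↦ ?_
        rw [← mem_antidiagonal.mp hp]
        ring
  have hω_sum := (summable_majorant hω hr hrR 0).norm
  have hh_sum := (summable_majorant hh hr hrR 1).norm
  calc majorant 1 g c r
    _ ≤ ∑' n, ∑ p ∈ antidiagonal n, ‖taylorCoeff ω c p.1‖ * r ^ p.1 *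
          (‖taylorCoeff h c (p.2 + 1)‖ * r ^ (p.2 + 1)) :=
      (summable_majorant hg hr hrR 1).tsum_le_tsum h_le
        (summable_norm_sum_mul_antidiagonal_of_summable_norm hω_sum hh_sum).of_norm
    _ = majorant 0 ω c r * majorant 1 h c r :=
      (tsum_mul_tsum_eq_tsum_sum_antidiagonal_of_summable_norm hω_sum hh_sum).symm

theorem majorant_one_le_of_norm_deriv_le (hR : 0 < R) (hg : DifferentiableOn ℂ g (ball c R))
    (hh : DifferentiableOn ℂ h (ball c R)) (hgh : ∀ z ∈ ball c R, ‖deriv g z‖ ≤ ‖deriv h z‖)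
    (hr : 0 ≤ r) (hrR : r ≤ R / 3) : majorant 1 g c r ≤ majorant 1 h c r := by
  obtain ⟨ω, hω, hω_le, hω_mul⟩ := exists_differentiableOn_eq_mul_of_norm_le isOpen_ball
    (hg.deriv isOpen_ball) (hh.deriv isOpen_ball) hgh
  calc majorant 1 g c r
    _ ≤ majorant 0 ω c r * majorant 1 h c r :=
      majorant_one_le_mul_of_deriv_eq_mul hg hω hh hω_mul hr (by linarith)
    _ ≤ majorant 1 h c r :=
      mul_le_of_le_one_left (majorant_nonneg 1 h c hr)
        (majorant_zero_le_of_norm_le hR hω hω_le hr hrR)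

theorem majorant_one_le_mul_of_norm_deriv_le {k : ℝ} (hk : 0 ≤ k) (hR : 0 < R)
    (hg : DifferentiableOn ℂ g (ball c R)) (hh : DifferentiableOn ℂ h (ball c R))
    (hgh : ∀ z ∈ ball c R, ‖deriv g z‖ ≤ k * ‖deriv h z‖)
    (hr : 0 ≤ r) (hrR : r ≤ R / 3) : majorant 1 g c r ≤ k * majorant 1 h c r := by
  have hk_norm : ‖(k : ℂ)‖ = k := Complex.norm_of_nonneg hk
  rw [← hk_norm, ← majorant_const_mul]
  refine majorant_one_le_of_norm_deriv_le hR hg (hh.const_mul _) (fun z hz ↦ ?_) hr hrR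
  rw [deriv_const_mul_field, norm_mul, hk_norm]
  exact hgh z hz

end Comparison

theorem bohr_harmonic_general (h g : ℂ → ℂ) (hd : DifferentiableOn ℂ h (ball 0 1))
    (gd : DifferentiableOn ℂ g (ball 0 1)) (hb : ∀ z ∈ ball (0 : ℂ) 1, ‖h z‖ ≤ 1)
    (k : ℝ) (hk : 0 ≤ k) (hgh : ∀ z ∈ ball (0 : ℂ) 1, ‖deriv g z‖ ≤ k * ‖deriv h z‖)
    (w : ℂ) (hw : ‖w‖ < 1) (r : ℝ) (hr : 0 ≤ r)
    (hroot : 2 * r * (1 + k) * (1 + ‖w‖) ≤ (1 - r) * (1 - ‖w‖)) :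
    ‖h w‖ + majorant 1 h 0 r + majorant 1 g 0 r ≤ 1 := by
  have h_two_mul_le : 2 * r ≤ (1 - r) * (1 - ‖w‖) :=
    calc 2 * r
      _ = 2 * r * (1 + 0) * (1 + 0) := by ring
      _ ≤ 2 * r * (1 + k) * (1 + ‖w‖) := by
        gcongr
        exact norm_nonneg w
      _ ≤ (1 - r) * (1 - ‖w‖) := hroot
  have hr3 : r ≤ 1 / 3 := by nlinarith [norm_nonneg w]
  have hr1 : r < 1 := by linarith
  have h_ratio : (1 + k) * (2 * (r / (1 - r))) ≤ (1 - ‖w‖) / (1 + ‖w‖) := by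
    have h_sub : 0 < 1 - r := sub_pos.mpr hr1
    have h_add : 0 < 1 + ‖w‖ := by positivity
    rw [le_div_iff₀ h_add]
    field_simp
    linarith
  have h_center : 0 ≤ 1 - ‖h 0‖ := sub_nonneg.mpr (hb 0 (mem_ball_self one_pos))
  suffices majorant 1 h 0 r + majorant 1 g 0 r ≤ 1 - ‖h w‖ by linarith
  calc majorant 1 h 0 r + majorant 1 g 0 r
    _ ≤ majorant 1 h 0 r + k * majorant 1 h 0 r := by
      gcongr
      exact majorant_one_le_mul_of_norm_deriv_le hk one_pos gd hd hgh hr hr3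
    _ = (1 + k) * majorant 1 h 0 r := by ring
    _ ≤ (1 + k) * (2 * (1 - ‖h 0‖) * (r / (1 - r))) := by
      gcongr
      exact majorant_one_le_of_norm_le hd hb hr hr1
    _ = (1 + k) * (2 * (r / (1 - r))) * (1 - ‖h 0‖) := by ring
    _ ≤ (1 - ‖w‖) / (1 + ‖w‖) * (1 - ‖h 0‖) := by gcongr
    _ ≤ 1 - ‖h w‖ := by
      simpa using div_mul_sub_norm_le_sub_norm hd hb (mem_ball_zero_iff.mpr hw)

/-- Theorem 5 (sufficiency): Bohr inequality for harmonic mappings `f = h + conj g`. -/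
theorem bohr_harmonic (h g : ℂ → ℂ)
    (hd : DifferentiableOn ℂ h (Metric.ball (0 : ℂ) 1))
    (gd : DifferentiableOn ℂ g (Metric.ball (0 : ℂ) 1))
    (hb : ∀ z : ℂ, ‖z‖ < 1 → ‖h z‖ < 1)
    (k : ℝ) (hk : k ∈ Set.Icc (0 : ℝ) 1)
    (hgh : ∀ z : ℂ, ‖z‖ < 1 → ‖deriv g z‖ ≤ k * ‖deriv h z‖)
    (m : ℕ) (hm : 1 ≤ m) (r : ℝ) (hr : r ∈ Set.Ico (0 : ℝ) 1)
    (hr3 : r ≤ 1 / 3)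
    (hroot : 2 * r * (1 + k) * (1 + r ^ m) - (1 - r) * (1 - r ^ m) ≤ 0) :
    ∀ z : ℂ, ‖z‖ = r →
      ‖h (z ^ m)‖ +
        (∑' n : ℕ, ‖iteratedDeriv (n + 1) h 0 / (Nat.factorial (n + 1) : ℂ)‖ * r ^ (n + 1)) +
        (∑' n : ℕ, ‖iteratedDeriv (n + 1) g 0 / (Nat.factorial (n + 1) : ℂ)‖ * r ^ (n + 1))
        ≤ 1 := by
  intro z hz
  have hw : ‖z ^ m‖ = r ^ m := by rw [norm_pow, hz]
  refine bohr_harmonic_general h g hd gd (fun z hz ↦ (hb z (mem_ball_zero_iff.mp hz)).le) k hk.1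
    (fun z hz ↦ hgh z (mem_ball_zero_iff.mp hz)) (z ^ m) ?_ r hr.1 ?_
  · rw [hw]
    exact pow_lt_one₀ hr.1 hr.2 (Nat.one_le_iff_ne_zero.mp hm)
  · rw [hw]
    exact sub_nonpos.mp hroot
end
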